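/- arXiv:2007.03528 — 2 statements merged into one kernel-verified Lean document; each statement's English description precedes it below -/
import Mathlib

section
/- There exist absolute constants c > 0 and C > 0 such that for every finite abelian group G of odd order N ≥ 3 and every A ⊆ G containing no non-trivial three-term arithmetic progression (no x,y,z ∈ A with x + y = 2z and x ≠ y), one has |A| ≤ C·N/(log N)^{1+c}. -/
set_option linter.unusedSectionVars false
set_option linter.unusedVariables false

open Finset

namespace KM

section moments

variable {G : Type} [AddCommGroup G] [Fintype G] [DecidableEq G]

/-- autocorrelation -/
noncomputable def acorr (f : G → ℝ) (t : G) : ℝ := ∑ s, f (s + t) * f s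

/-- self-convolution -/
noncomputable def sconv (f : G → ℝ) (t : G) : ℝ := ∑ s, f s * f (t - s)

lemma moment_eq {I : Type} [Fintype I] (w : I → ℝ) (pos : I → G) (f f' : G → ℝ) (p : ℕ) :
    ∑ i, ∑ j, w i * w j * (∑ s, f (s + pos i) * f' (s + pos j)) ^ p
      = ∑ s : Fin p → G, (∑ i, w i * ∏ k, f (s k + pos i)) *
          (∑ j, w j * ∏ k, f' (s k + pos j)) := by
  simp_rw [Finset.sum_mul_sum, Fintype.sum_pow, Finset.mul_sum]
  rw [Finset.sum_comm' (s := univ) (t := fun _ => univ) (t' := univ) (s' := fun _ => univ)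
    (by simp)]
  rw [Finset.sum_comm]
  conv_rhs => rw [Finset.sum_comm]
  refine Finset.sum_congr rfl fun i _ => ?_
  conv_rhs => rw [Finset.sum_comm]
  refine Finset.sum_congr rfl fun j _ => ?_
  refine Finset.sum_congr rfl fun s _ => ?_
  rw [Finset.prod_mul_distrib]
  ring

lemma acorr_sub (f : G → ℝ) (x y : G) : acorr f (x - y) = ∑ s, f (s + x) * f (s + y) := by
  unfold acorr
  rw [← Equiv.sum_comp (Equiv.addRight y)]
  refine Finset.sum_congr rfl fun s _ => ?_
  simp only [Equiv.coe_addRight]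
  congr 2
  abel

lemma sconv_sub (f : G → ℝ) (x y : G) :
    sconv f (x - y) = ∑ s, f (s + x) * (fun z => f (-z)) (s + y) := by
  unfold sconv
  rw [← Equiv.sum_comp (Equiv.addRight x)]
  refine Finset.sum_congr rfl fun s _ => ?_
  simp only [Equiv.coe_addRight]
  congr 2
  abel

lemma acorr_neg_fun (f : G → ℝ) (t : G) : acorr (fun z => f (-z)) t = acorr f t := by
  unfold acorr
  rw [← Equiv.sum_comp ((Equiv.neg G).trans (Equiv.addRight (-t)))]
  refine Finset.sum_congr rfl fun s _ => ?_
  simp only [Equiv.trans_apply, Equiv.neg_apply, Equiv.coe_addRight]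
  rw [mul_comm]
  congr 2 <;> abel

lemma acorr_moment_nonneg {I : Type} [Fintype I] (w : I → ℝ) (pos : I → G) (f : G → ℝ) (p : ℕ) :
    0 ≤ ∑ i, ∑ j, w i * w j * (acorr f (pos i - pos j)) ^ p := by
  simp_rw [acorr_sub]
  rw [moment_eq]
  exact Finset.sum_nonneg fun s _ => mul_self_nonneg _

lemma sconv_moment_le {I : Type} [Fintype I] (w : I → ℝ) (pos : I → G) (f : G → ℝ) (p : ℕ) :
    ∑ i, ∑ j, w i * w j * (sconv f (pos i - pos j)) ^ p ≤
      ∑ i, ∑ j, w i * w j * (acorr f (pos i - pos j)) ^ p := by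
  have h1 : ∑ i, ∑ j, w i * w j * (acorr f (pos i - pos j)) ^ p =
      ∑ s : Fin p → G, (∑ i, w i * ∏ k, f (s k + pos i)) *
          (∑ j, w j * ∏ k, f (s k + pos j)) := by
    simp_rw [acorr_sub]
    rw [moment_eq]
  have h2 : ∑ i, ∑ j, w i * w j * (acorr f (pos i - pos j)) ^ p =
      ∑ s : Fin p → G, (∑ i, w i * ∏ k, (fun z => f (-z)) (s k + pos i)) *
          (∑ j, w j * ∏ k, (fun z => f (-z)) (s k + pos j)) := by
    simp_rw [← acorr_neg_fun f, acorr_sub]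
    exact moment_eq w pos (fun z => f (-z)) (fun z => f (-z)) p
  have h3 : ∑ i, ∑ j, w i * w j * (sconv f (pos i - pos j)) ^ p =
      ∑ s : Fin p → G, (∑ i, w i * ∏ k, f (s k + pos i)) *
          (∑ j, w j * ∏ k, (fun z => f (-z)) (s k + pos j)) := by
    simp_rw [sconv_sub]
    exact moment_eq w pos f (fun z => f (-z)) p
  have h4 : 2 * ∑ i, ∑ j, w i * w j * (sconv f (pos i - pos j)) ^ p ≤
     ∑ i, ∑ j, w i * w j * (acorr f (pos i - pos j)) ^ p +
     ∑ i, ∑ j, w i * w j * (acorr f (pos i - pos j)) ^ p := by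
    nth_rewrite 1 [h1]
    rw [h2, h3, Finset.mul_sum, ← Finset.sum_add_distrib]
    refine Finset.sum_le_sum fun s _ => ?_
    nlinarith [sq_nonneg ((∑ i, w i * ∏ k, f (s k + pos i)) -
          (∑ j, w j * ∏ k, (fun z => f (-z)) (s k + pos j)))]
  linarith

lemma four_pow_le_choose (p : ℕ) : 4 ^ p ≤ Nat.choose (4 * p) p := by
  rcases Nat.eq_zero_or_pos p with rfl | hp
  · simp
  have key : (4 * p).descFactorial p = p.factorial * (4 * p).choose p :=
    Nat.descFactorial_eq_factorial_mul_choose _ _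
  have h2 : 4 ^ p * p.descFactorial p ≤ (4 * p).descFactorial p := by
    have : ∀ k ≤ p, 4 ^ k * p.descFactorial k ≤ (4 * p).descFactorial k := by
      intro k
      induction k with
      | zero => simp
      | succ k ih =>
        intro hk
        rw [Nat.descFactorial_succ, Nat.descFactorial_succ]
        calc 4 ^ (k + 1) * ((p - k) * p.descFactorial k)
            = (4 * (p - k)) * (4 ^ k * p.descFactorial k) := by ring
          _ ≤ (4 * p - k) * (4 * p).descFactorial k :=
            Nat.mul_le_mul (by omega) (ih (by omega))
    exact this p le_rfl
  rw [Nat.descFactorial_self, key, mul_comm] at h2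
  exact Nat.le_of_mul_le_mul_left h2 (Nat.factorial_pos p)

lemma unbalance {I : Type} [Fintype I] (w : I → ℝ) (pos : I → G) (f : G → ℝ) (p : ℕ)
    (V : ℝ) (hV : 0 ≤ V) :
    4 ^ p * V ^ (3 * p) * ∑ i, ∑ j, w i * w j * (acorr f (pos i - pos j)) ^ p ≤
      ∑ i, ∑ j, w i * w j * (V + acorr f (pos i - pos j)) ^ (4 * p) := by
  have h1 : ∑ i, ∑ j, w i * w j * (V + acorr f (pos i - pos j)) ^ (4 * p) =
      ∑ m ∈ range (4 * p + 1), (V ^ (4 * p - m) * (4 * p).choose m) *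
        ∑ i, ∑ j, w i * w j * (acorr f (pos i - pos j)) ^ m := by
    simp_rw [add_comm V, add_pow, Finset.mul_sum]
    rw [Finset.sum_comm' (s := univ) (t := fun _ => univ) (t' := univ) (s' := fun _ => univ)
      (by simp)]
    conv_rhs => rw [Finset.sum_comm]
    rw [Finset.sum_comm]
    refine Finset.sum_congr rfl fun i _ => ?_
    conv_rhs => rw [Finset.sum_comm]
    refine Finset.sum_congr rfl fun j _ => ?_
    refine Finset.sum_congr rfl fun s _ => ?_
    ring
  rw [h1]
  have hc : (4 : ℝ) ^ p ≤ ((4 * p).choose p : ℝ) := by exact_mod_cast four_pow_le_choose p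
  calc _ ≤ (V ^ (4 * p - p) * (4 * p).choose p) *
        ∑ i, ∑ j, w i * w j * (acorr f (pos i - pos j)) ^ p := by
        apply mul_le_mul_of_nonneg_right _ (acorr_moment_nonneg w pos f p)
        rw [show 4 * p - p = 3 * p by omega, mul_comm]
        gcongr
    _ ≤ _ := by
        apply Finset.single_le_sum (f := fun m => (V ^ (4 * p - m) * (4 * p).choose m) *
        ∑ i, ∑ j, w i * w j * (acorr f (pos i - pos j)) ^ m) (a := p)
        · intro m _
          exact mul_nonneg (by positivity) (acorr_moment_nonneg w pos f m)
        · simp; omega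

end moments

end KM

set_option linter.unusedSectionVars false
set_option linter.unusedVariables false

open Finset

namespace KM

section apmoment

variable {G : Type} [AddCommGroup G] [Fintype G] [DecidableEq G]

/-- indicator function of a finset -/
noncomputable def ind (S : Finset G) (x : G) : ℝ := if x ∈ S then 1 else 0

lemma ind_nonneg (S : Finset G) (x : G) : 0 ≤ ind S x := by unfold ind; split_ifs <;> norm_num
lemma ind_le_one (S : Finset G) (x : G) : ind S x ≤ 1 := by unfold ind; split_ifs <;> norm_num
lemma sum_ind (S : Finset G) : ∑ x, ind S x = (S.card : ℝ) := by simp [ind]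

lemma sum_ind_mul (S : Finset G) (f : G → ℝ) : ∑ x, ind S x * f x = ∑ x ∈ S, f x := by
  simp [ind, Finset.sum_ite_mem]

lemma corr_le (A B : Finset G) (g : G → G) : ∑ s, ind A s * ind B (g s) ≤ (A.card : ℝ) := by
  rw [← sum_ind]
  exact Finset.sum_le_sum fun s _ =>
    mul_le_of_le_one_right (ind_nonneg _ _) (ind_le_one _ _)

lemma corr_ge (A B : Finset G) (hAB : A ⊆ B) (t : G) (e : ℝ)
    (h : ((B.filter fun b => b + t ∉ B).card : ℝ) ≤ e) :
    (A.card : ℝ) - e ≤ ∑ s, ind A s * ind B (s + t) := by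
  rw [sum_ind_mul]
  have h1 : ∑ s ∈ A, ind B (s + t) = ((A.filter fun b => b + t ∈ B).card : ℝ) := by
    simp [ind]
  have h2 := Finset.card_filter_add_card_filter_not (s := A) (fun b => b + t ∈ B)
  have h3 : (A.filter fun b => b + t ∉ B).card ≤ (B.filter fun b => b + t ∉ B).card :=
    Finset.card_le_card (Finset.filter_subset_filter _ hAB)
  rw [h1]
  have h4 : ((A.filter fun b => b + t ∈ B).card : ℝ) + ((A.filter fun b => b + t ∉ B).card : ℝ)
    = A.card := by exact_mod_cast h2
  have h5 : ((A.filter fun b => b + t ∉ B).card : ℝ) ≤ ((B.filter fun b => b + t ∉ B).card : ℝ) := by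
    exact_mod_cast h3
  linarith

lemma ind_neg {B : Finset G} (hB : ∀ x ∈ B, -x ∈ B) (x : G) : ind B (-x) = ind B x := by
  unfold ind
  have : -x ∈ B ↔ x ∈ B := ⟨fun h => by simpa using hB _ h, hB x⟩
  simp [this]

lemma shift_sum (u v : G → ℝ) (t : G) : ∑ s, u (s + t) * v s = ∑ s, u s * v (s + -t) := by
  rw [← Equiv.sum_comp (Equiv.addRight (-t))]
  refine Finset.sum_congr rfl fun s _ => ?_
  simp

lemma refl_sum (u v : G → ℝ) (t : G) : ∑ s, u s * v (t - s) = ∑ s, v s * u (t - s) := by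
  rw [← Equiv.sum_comp (Equiv.subLeft t)]
  refine Finset.sum_congr rfl fun s _ => ?_
  simp [mul_comm]

lemma sconv_bound (A B : Finset G) (hAB : A ⊆ B) (hB : ∀ x ∈ B, -x ∈ B) (t : G) (a δ : ℝ)
    (ha : (A.card : ℝ) = a * B.card) (ha0 : 0 ≤ a)
    (h : ((B.filter fun b => b + -t ∉ B).card : ℝ) ≤ δ * B.card) :
    sconv (fun x => ind A x - a * ind B x) t ≤
      sconv (ind A) t - (a ^ 2 - 2 * a * δ) * B.card := by
  have e1 : sconv (fun x => ind A x - a * ind B x) t = sconv (ind A) t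
      - a * ∑ s, ind A s * ind B (t - s) - a * ∑ s, ind B s * ind A (t - s)
      + a ^ 2 * ∑ s, ind B s * ind B (t - s) := by
    unfold sconv
    simp only [Finset.mul_sum, ← Finset.sum_sub_distrib, ← Finset.sum_add_distrib]
    refine Finset.sum_congr rfl fun s _ => ?_
    ring
  have e2 : ∑ s, ind A s * ind B (t - s) = ∑ s, ind A s * ind B (s + -t) := by
    refine Finset.sum_congr rfl fun s _ => ?_
    rw [← ind_neg hB]
    congr 2
    abel
  have e3 := corr_ge A B hAB (-t) _ h
  have e4 := corr_le B B (fun s => t - s)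
  rw [e1, refl_sum (ind B) (ind A), e2]
  nlinarith [mul_le_mul_of_nonneg_left e3 ha0, mul_le_mul_of_nonneg_left e4 (sq_nonneg a)]

lemma acorr_bound (A B : Finset G) (hAB : A ⊆ B) (t : G) (a δ : ℝ)
    (ha : (A.card : ℝ) = a * B.card) (ha0 : 0 ≤ a) (hδ : 0 ≤ δ) (ha1 : 100 * δ ≤ a) (ha2 : a ≤ 1)
    (h : ((B.filter fun b => b + t ∉ B).card : ℝ) ≤ δ * B.card)
    (h' : ((B.filter fun b => b + -t ∉ B).card : ℝ) ≤ δ * B.card) :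
    |a ^ 2 * B.card + acorr (fun x => ind A x - a * ind B x) t| ≤
      acorr (ind A) t + 0.02 * (a ^ 2 * B.card) := by
  have e1 : acorr (fun x => ind A x - a * ind B x) t = acorr (ind A) t
      - a * ∑ s, ind A (s + t) * ind B s - a * ∑ s, ind A s * ind B (s + t)
      + a ^ 2 * ∑ s, ind B s * ind B (s + t) := by
    unfold acorr
    simp only [Finset.mul_sum, ← Finset.sum_sub_distrib, ← Finset.sum_add_distrib]
    refine Finset.sum_congr rfl fun s _ => ?_
    ring
  have hB0 : (0 : ℝ) ≤ B.card := by positivity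
  have e3 := corr_ge A B hAB t _ h
  have e3' := corr_ge A B hAB (-t) _ h'
  have e4 := corr_le B B (fun s => s + t)
  have e5 := corr_ge B B le_rfl t _ h
  have e6 := corr_le A B (fun s => s + t)
  have e6' := corr_le A B (fun s => s + -t)
  have e7 : 0 ≤ acorr (ind A) t :=
    Finset.sum_nonneg fun s _ => mul_nonneg (ind_nonneg _ _) (ind_nonneg _ _)
  rw [e1, shift_sum (ind A) (ind B)]
  have f1 := mul_le_mul_of_nonneg_left e3 ha0
  have f2 := mul_le_mul_of_nonneg_left e3' ha0
  have f3 := mul_le_mul_of_nonneg_left e4 (sq_nonneg a)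
  have f4 := mul_le_mul_of_nonneg_left e5 (sq_nonneg a)
  have f5 := mul_le_mul_of_nonneg_left e6 ha0
  have f6 := mul_le_mul_of_nonneg_left e6' ha0
  rw [ha] at *
  have g1 : a * δ * B.card ≤ 0.01 * (a ^ 2 * B.card) := by
    have : δ ≤ 0.01 * a := by linarith
    nlinarith [mul_nonneg ha0 hB0, mul_le_mul_of_nonneg_left this (mul_nonneg ha0 hB0)]
  have g2 : a ^ 2 * δ * B.card ≤ 0.01 * (a ^ 2 * B.card) := by
    have : δ ≤ 0.01 := by linarith
    nlinarith [mul_le_mul_of_nonneg_left this (mul_nonneg (sq_nonneg a) hB0)]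
  rw [abs_le]
  constructor <;> nlinarith

lemma moment_Q {I : Type} [Fintype I] (w : I → ℝ) (hw : ∀ i, 0 ≤ w i) (pos : I → G)
    (A B : Finset G) (hAB : A ⊆ B) (hB : ∀ x ∈ B, -x ∈ B) (a δ : ℝ)
    (ha : (A.card : ℝ) = a * B.card) (ha0 : 0 ≤ a) (hδ : 0 ≤ δ) (ha1 : 100 * δ ≤ a) (ha2 : a ≤ 1)
    (hsm : ∀ i j, ((B.filter fun b => b + (pos i - pos j) ∉ B).card : ℝ) ≤ δ * B.card)
    (hbig : 100 ≤ a ^ 2 * B.card)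
    (good : I → I → Prop) [∀ i j, Decidable (good i j)]
    (hgood : ∀ i j, good i j → sconv (ind A) (pos i - pos j) ≤ 1)
    (l : ℕ)
    (hW : (1 / 2 : ℝ) ^ (l + 2) * (∑ i, w i) ^ 2 ≤
      ∑ i, ∑ j, w i * w j * (if good i j then 1 else 0)) :
    (1.2 * (a ^ 2 * B.card)) ^ (80 * (l + 1)) * (∑ i, w i) ^ 2 ≤
      ∑ i, ∑ j, w i * w j * (acorr (ind A) (pos i - pos j)) ^ (80 * (l + 1)) := by
  set V : ℝ := a ^ 2 * B.card with hVdef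
  have hV0 : 0 < V := by linarith
  set f : G → ℝ := fun x => ind A x - a * ind B x with hf
  set W := ∑ i, w i with hWdef
  obtain ⟨p, hp⟩ : ∃ p, p = 20 * (l + 1) := ⟨_, rfl⟩
  have hpe : Even p := by rw [hp]; exact (by decide : Even 20).mul_right _
  have hww : ∀ i j, 0 ≤ w i * w j := fun i j => mul_nonneg (hw i) (hw j)
  have hB0 : (0 : ℝ) ≤ B.card := by positivity
  -- step 1
  have s1 : (0.9 * V) ^ p * ((1 / 2 : ℝ) ^ (l + 2) * W ^ 2) ≤
      ∑ i, ∑ j, w i * w j * (sconv f (pos i - pos j)) ^ p := by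
    calc _ ≤ (0.9 * V) ^ p * ∑ i, ∑ j, w i * w j * (if good i j then 1 else 0) := by gcongr
      _ = ∑ i, ∑ j, w i * w j * ((if good i j then 1 else 0) * (0.9 * V) ^ p) := by
        simp only [Finset.mul_sum]
        refine Finset.sum_congr rfl fun i _ => Finset.sum_congr rfl fun j _ => ?_
        ring
      _ ≤ _ := by
        refine Finset.sum_le_sum fun i _ => Finset.sum_le_sum fun j _ => ?_
        apply mul_le_mul_of_nonneg_left _ (hww i j)
        split_ifs with hg
        · rw [one_mul]
          have b1 := sconv_bound A B hAB hB (pos i - pos j) a δ ha ha0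
            (by rw [neg_sub]; exact hsm j i)
          have b2 := hgood i j hg
          have g1 : a * δ * B.card ≤ 0.01 * (a ^ 2 * B.card) := by
            have : δ ≤ 0.01 * a := by linarith
            nlinarith [mul_nonneg ha0 hB0, mul_le_mul_of_nonneg_left this (mul_nonneg ha0 hB0)]
          have b3 : sconv f (pos i - pos j) ≤ -(0.9 * V) := by
            rw [hf]; nlinarith
          rw [← hpe.neg_pow (sconv f (pos i - pos j))]
          apply pow_le_pow_left₀ (by positivity)
          linarith
        · rw [zero_mul]; exact hpe.pow_nonneg _
  have s2 := sconv_moment_le w pos f p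
  have s3 := unbalance w pos f p V hV0.le
  have s4 : ∑ i, ∑ j, w i * w j * (V + acorr f (pos i - pos j)) ^ (4 * p) ≤
      1.05 ^ (4 * p) * (∑ i, ∑ j, w i * w j * (acorr (ind A) (pos i - pos j)) ^ (4 * p))
        + V ^ (4 * p) * W ^ 2 := by
    have : V ^ (4 * p) * W ^ 2 = ∑ i, ∑ j, w i * w j * V ^ (4 * p) := by
      rw [sq, hWdef, Finset.sum_mul_sum, Finset.mul_sum]
      refine Finset.sum_congr rfl fun i _ => ?_
      rw [Finset.mul_sum]
      refine Finset.sum_congr rfl fun j _ => ?_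
      ring
    rw [this]
    simp only [Finset.mul_sum, ← Finset.sum_add_distrib]
    refine Finset.sum_le_sum fun i _ => Finset.sum_le_sum fun j _ => ?_
    have key : (V + acorr f (pos i - pos j)) ^ (4 * p) ≤
        (1.05 * acorr (ind A) (pos i - pos j)) ^ (4 * p) + V ^ (4 * p) := by
      have he : Even (4 * p) := hpe.mul_left 4
      have b := acorr_bound A B hAB (pos i - pos j) a δ ha ha0 hδ ha1 ha2 (hsm i j)
        (by rw [neg_sub]; exact hsm j i)
      rw [← he.pow_abs]
      have e7 : 0 ≤ acorr (ind A) (pos i - pos j) :=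
        Finset.sum_nonneg fun s _ => mul_nonneg (ind_nonneg _ _) (ind_nonneg _ _)
      have b' : |V + acorr f (pos i - pos j)| ≤ acorr (ind A) (pos i - pos j) + 0.02 * V := b
      rcases le_total (0.4 * V) (acorr (ind A) (pos i - pos j)) with hc | hc
      · calc _ ≤ (1.05 * acorr (ind A) (pos i - pos j)) ^ (4 * p) :=
              pow_le_pow_left₀ (abs_nonneg _) (by linarith) _
          _ ≤ _ := le_add_of_nonneg_right (by positivity)
      · calc _ ≤ V ^ (4 * p) := pow_le_pow_left₀ (abs_nonneg _) (by linarith) _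
          _ ≤ _ := le_add_of_nonneg_left (by positivity)
    calc _ ≤ w i * w j * ((1.05 * acorr (ind A) (pos i - pos j)) ^ (4 * p) + V ^ (4 * p)) :=
          mul_le_mul_of_nonneg_left key (hww i j)
      _ = _ := by rw [mul_pow]; ring
  have h4p : 4 * p = 80 * (l + 1) := by omega
  have n1 : (1.3 : ℝ) ^ (4 * p) ≤ 4 ^ p * 0.9 ^ p * (1 / 2 : ℝ) ^ (l + 2) := by
    have c1 : (1.3 : ℝ) ^ (4 * p) = (1.3 ^ 80) ^ (l + 1) := by rw [h4p, pow_mul]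
    have c2 : (4 : ℝ) ^ p * 0.9 ^ p = ((3.6 : ℝ) ^ 20) ^ (l + 1) := by
      rw [← mul_pow, hp, pow_mul]; norm_num
    have c3 : (1 / 4 : ℝ) ^ (l + 1) ≤ (1 / 2 : ℝ) ^ (l + 2) := by
      rw [show (1 / 4 : ℝ) = (1 / 2) ^ 2 by norm_num, ← pow_mul]
      exact pow_le_pow_of_le_one (by norm_num) (by norm_num) (by omega)
    rw [c1, c2]
    calc _ ≤ ((3.6 : ℝ) ^ 20 * (1 / 4)) ^ (l + 1) := by
          apply pow_le_pow_left₀ (by positivity); norm_num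
      _ = ((3.6 : ℝ) ^ 20) ^ (l + 1) * (1 / 4 : ℝ) ^ (l + 1) := by rw [mul_pow]
      _ ≤ _ := by gcongr
  have n2 : (1.26 : ℝ) ^ (4 * p) + 1 ≤ 1.3 ^ (4 * p) := by
    rw [h4p, pow_mul, pow_mul]
    have c1 : (2 * 1.26 ^ 80 : ℝ) ^ (l + 1) ≤ ((1.3 : ℝ) ^ 80) ^ (l + 1) := by
      apply pow_le_pow_left₀ (by positivity); norm_num
    have c2 : (2 : ℝ) ≤ 2 ^ (l + 1) := by
      have := pow_le_pow_right₀ (show (1 : ℝ) ≤ 2 by norm_num) (show 1 ≤ l + 1 by omega)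
      simpa using this
    have c3 : (1 : ℝ) ≤ (1.26 ^ 80 : ℝ) ^ (l + 1) := one_le_pow₀ (by norm_num)
    rw [mul_pow] at c1
    nlinarith
  have m1 : (1.3 : ℝ) ^ (4 * p) * V ^ (4 * p) * W ^ 2 ≤
      1.05 ^ (4 * p) * (∑ i, ∑ j, w i * w j * (acorr (ind A) (pos i - pos j)) ^ (4 * p))
        + V ^ (4 * p) * W ^ 2 := by
    calc _ ≤ (4 ^ p * 0.9 ^ p * (1 / 2 : ℝ) ^ (l + 2)) * V ^ (4 * p) * W ^ 2 := by gcongr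
      _ = 4 ^ p * V ^ (3 * p) * ((0.9 * V) ^ p * ((1 / 2 : ℝ) ^ (l + 2) * W ^ 2)) := by
        rw [mul_pow, show 4 * p = 3 * p + p by ring, pow_add]; ring
      _ ≤ 4 ^ p * V ^ (3 * p) * ∑ i, ∑ j, w i * w j * (acorr f (pos i - pos j)) ^ p := by
        gcongr
        exact s1.trans s2
      _ ≤ _ := s3.trans s4
  rw [← h4p]
  have m2 : (1.26 : ℝ) ^ (4 * p) * (V ^ (4 * p) * W ^ 2) ≤
      1.05 ^ (4 * p) * (∑ i, ∑ j, w i * w j * (acorr (ind A) (pos i - pos j)) ^ (4 * p)) := by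
    have : 0 ≤ V ^ (4 * p) * W ^ 2 := by positivity
    nlinarith
  have m3 : (1.26 : ℝ) ^ (4 * p) = 1.05 ^ (4 * p) * 1.2 ^ (4 * p) := by
    rw [← mul_pow]; norm_num
  rw [m3, mul_assoc] at m2
  have := le_of_mul_le_mul_left m2 (by positivity)
  rw [mul_pow, mul_assoc]
  exact this

end apmoment

end KM

set_option linter.unusedSectionVars false
set_option linter.unusedVariables false

open Finset

namespace KM

section sifting

variable {G : Type} [AddCommGroup G] [Fintype G] [DecidableEq G]

lemma sift_expand (A : Finset G) (T T2 : Finset G) (c : G) (n : ℕ) (F : G → G → ℝ) :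
    ∑ x ∈ T, ∑ y ∈ T2, F x y * (acorr (ind A) (x - y + c)) ^ n =
      ∑ s : Fin n → G, ∑ x ∈ T.filter (fun x => ∀ k, s k + (x + c) ∈ A),
        ∑ y ∈ T2.filter (fun y => ∀ k, s k + y ∈ A), F x y := by
  have h : ∀ x y, (acorr (ind A) (x - y + c)) ^ n =
      ∑ s : Fin n → G, (if (∀ k, s k + (x + c) ∈ A) then (1 : ℝ) else 0) *
        (if (∀ k, s k + y ∈ A) then 1 else 0) := by
    intro x y
    rw [show x - y + c = (x + c) - y by abel, acorr_sub, Fintype.sum_pow]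
    refine Finset.sum_congr rfl fun s _ => ?_
    rw [Finset.prod_mul_distrib]
    congr 1
    · simp only [ind, Finset.prod_ite_zero]
      simp
    · simp only [ind, Finset.prod_ite_zero]
      simp
  simp_rw [h, Finset.mul_sum, Finset.sum_filter]
  rw [Finset.sum_comm' (s := univ) (t := fun _ => T) (t' := T) (s' := fun _ => univ)
    (by simp)]
  refine Finset.sum_congr rfl fun x _ => ?_
  rw [Finset.sum_comm]
  refine Finset.sum_congr rfl fun s _ => ?_
  split_ifs with h1
  · refine Finset.sum_congr rfl fun y _ => ?_
    split_ifs <;> simp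
  · simp

lemma sift (A : Finset G) (T T2 R : Finset G) (c : G) (n : ℕ) (hn : 80 ≤ n) (V : ℝ) (hV : 0 < V)
    (hT : T.Nonempty) (hT2 : T2.Nonempty)
    (hR : ∀ a ∈ A, ∀ y ∈ T2, a - y ∈ R)
    (hQ : (1.2 * V) ^ n * (T.card * T2.card) ≤
      ∑ x ∈ T, ∑ y ∈ T2, (acorr (ind A) (x - y + c)) ^ n) :
    ∃ A1 ⊆ T, ∃ A2 ⊆ T2, (1 / 4) * ((1.2 * V) ^ n * (T.card * T2.card)) ≤
        A1.card * A2.card * (R.card : ℝ) ^ n ∧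
      ∑ x ∈ A1, ∑ y ∈ A2, (if acorr (ind A) (x - y + c) < 1.1 * V then (1 : ℝ) else 0) ≤
        0.01 * (A1.card * A2.card) := by
  set M0 : ℝ := (1.2 * V) ^ n * (T.card * T2.card) with hM0
  have hTc : (0 : ℝ) < T.card := by exact_mod_cast hT.card_pos
  have hT2c : (0 : ℝ) < T2.card := by exact_mod_cast hT2.card_pos
  have hM0pos : 0 < M0 := by positivity
  set A1 : (Fin n → G) → Finset G := fun s => T.filter (fun x => ∀ k, s k + (x + c) ∈ A) with hA1
  set A2 : (Fin n → G) → Finset G := fun s => T2.filter (fun y => ∀ k, s k + y ∈ A) with hA2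
  set bd : (Fin n → G) → ℝ := fun s => ∑ x ∈ A1 s, ∑ y ∈ A2 s,
    (if acorr (ind A) (x - y + c) < 1.1 * V then (1 : ℝ) else 0) with hbd
  have hM : M0 ≤ ∑ s : Fin n → G, ((A1 s).card * (A2 s).card : ℝ) := by
    have := sift_expand A T T2 c n (fun _ _ => 1)
    simp only [one_mul] at this
    rw [this] at hQ
    refine hQ.trans (le_of_eq ?_)
    refine Finset.sum_congr rfl fun s _ => ?_
    simp [hA1, hA2]
  have hb : ∑ s, bd s ≤ M0 / 400 := by
    have := sift_expand A T T2 c n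
      (fun x y => if acorr (ind A) (x - y + c) < 1.1 * V then (1 : ℝ) else 0)
    rw [hbd, ← this]
    calc _ ≤ ∑ x ∈ T, ∑ y ∈ T2, (1.1 * V) ^ n := by
          refine Finset.sum_le_sum fun x _ => Finset.sum_le_sum fun y _ => ?_
          split_ifs with h
          · rw [one_mul]
            exact pow_le_pow_left₀ (Finset.sum_nonneg fun s _ =>
              mul_nonneg (ind_nonneg _ _) (ind_nonneg _ _)) h.le _
          · rw [zero_mul]; positivity
      _ = (1.1 * V) ^ n * (T.card * T2.card) := by simp; ring
      _ ≤ _ := by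
        rw [hM0]
        have h1 : (1.1 * V) ^ n ≤ (1.2 * V) ^ n / 400 := by
          have e : (1.1 * V) = (11 / 12) * (1.2 * V) := by ring
          rw [e, mul_pow]
          have : (11 / 12 : ℝ) ^ n ≤ 1 / 400 := by
            calc (11 / 12 : ℝ) ^ n ≤ (11 / 12 : ℝ) ^ 80 :=
                  pow_le_pow_of_le_one (by norm_num) (by norm_num) hn
              _ ≤ _ := by norm_num
          have h2 : 0 ≤ (1.2 * V) ^ n := by positivity
          nlinarith
        have h3 : (0 : ℝ) ≤ T.card * T2.card := by positivity
        nlinarith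
  have hzero : ∀ s : Fin n → G, s ∉ Fintype.piFinset (fun _ => R) → A2 s = ∅ := by
    intro s hs
    by_contra hne
    obtain ⟨y, hy⟩ := Finset.nonempty_iff_ne_empty.2 hne
    apply hs
    rw [Fintype.mem_piFinset]
    intro k
    rw [hA2, Finset.mem_filter] at hy
    have := hR _ (hy.2 k) y hy.1
    simpa using this
  have hcard : ((Fintype.piFinset (fun _ : Fin n => R)).card : ℝ) = (R.card : ℝ) ^ n := by
    simp [Fintype.card_piFinset]
  have hM' : M0 ≤ ∑ s ∈ Fintype.piFinset (fun _ : Fin n => R), ((A1 s).card * (A2 s).card : ℝ) := by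
    refine hM.trans (le_of_eq ?_)
    symm
    apply Finset.sum_subset (Finset.subset_univ _)
    intro s _ hs
    simp [hzero s hs]
  have hbn : ∀ s, 0 ≤ bd s := fun s =>
    Finset.sum_nonneg fun x _ => Finset.sum_nonneg fun y _ => by split_ifs <;> norm_num
  by_contra hcon
  push Not at hcon
  have key : ∀ s ∈ Fintype.piFinset (fun _ : Fin n => R),
      (R.card : ℝ) ^ n * ((A1 s).card * (A2 s).card : ℝ) ≤ M0 / 4 + (R.card : ℝ) ^ n * (100 * bd s) := by
    intro s _
    have hc := hcon (A1 s) (Finset.filter_subset _ _) (A2 s) (Finset.filter_subset _ _)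
    have hRn : (0 : ℝ) ≤ (R.card : ℝ) ^ n := by positivity
    by_cases hl : (1 / 4) * M0 ≤ (A1 s).card * (A2 s).card * (R.card : ℝ) ^ n
    · have h1 := hc hl
      have h2 : ((A1 s).card * (A2 s).card : ℝ) ≤ 100 * bd s := by
        rw [hbd]; linarith
      have := mul_le_mul_of_nonneg_left h2 hRn
      linarith
    · have := mul_nonneg hRn (hbn s)
      nlinarith
  have hsum := Finset.sum_le_sum key
  rw [← Finset.mul_sum, Finset.sum_add_distrib, ← Finset.mul_sum, ← Finset.mul_sum,
    Finset.sum_const, nsmul_eq_mul, hcard] at hsum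
  have hb' : ∑ s ∈ Fintype.piFinset (fun _ : Fin n => R), bd s ≤ M0 / 400 :=
    (Finset.sum_le_sum_of_subset_of_nonneg (Finset.subset_univ _) fun s _ _ => hbn s).trans hb
  have hRpos : (0 : ℝ) < (R.card : ℝ) ^ n := by
    rw [← hcard]
    norm_cast
    rw [Finset.card_pos]
    by_contra hne
    rw [Finset.not_nonempty_iff_eq_empty] at hne
    rw [hne] at hM'
    simp at hM'
    linarith
  nlinarith [mul_le_mul_of_nonneg_left hM' hRpos.le, mul_le_mul_of_nonneg_left hb' hRpos.le,
    mul_pos hRpos hM0pos]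

end sifting

end KM

set_option linter.unusedSectionVars false
set_option linter.unusedVariables false

open Finset

namespace KM

section crootsisask

variable {G : Type} [AddCommGroup G] [Fintype G] [DecidableEq G]

lemma mgf_bound (A : Finset G) (Z : G → ℝ) (hZ : ∀ a ∈ A, |Z a| ≤ 1) (h0 : ∑ a ∈ A, Z a = 0)
    (x : ℝ) (m : ℕ) :
    ∑ y ∈ Fintype.piFinset (fun _ : Fin m => A), Real.exp (x * ∑ i, Z (y i)) ≤
      Real.exp (x ^ 2 * m / 2) * (A.card : ℝ) ^ m := by
  have h1 : ∑ y ∈ Fintype.piFinset (fun _ : Fin m => A), Real.exp (x * ∑ i, Z (y i)) =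
      (∑ a ∈ A, Real.exp (x * Z a)) ^ m := by
    have := Finset.prod_univ_sum (fun _ : Fin m => A) (fun _ a => Real.exp (x * Z a))
    rw [Finset.prod_const, Finset.card_univ, Fintype.card_fin] at this
    rw [this]
    refine Finset.sum_congr rfl fun y _ => ?_
    rw [Finset.mul_sum, Real.exp_sum]
  have h2 : ∑ a ∈ A, Real.exp (x * Z a) ≤ Real.exp (x ^ 2 / 2) * A.card := by
    calc _ ≤ ∑ a ∈ A, (Real.cosh x + Z a * Real.sinh x) := by
          refine Finset.sum_le_sum fun a ha => ?_
          rw [mul_comm]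
          exact Real.exp_mul_le_cosh_add_mul_sinh (hZ a ha) x
      _ = A.card * Real.cosh x := by
          rw [Finset.sum_add_distrib, ← Finset.sum_mul, h0]; simp
      _ ≤ _ := by
          rw [mul_comm]
          gcongr
          exact Real.cosh_le_exp_half_sq x
  rw [h1]
  calc _ ≤ (Real.exp (x ^ 2 / 2) * A.card) ^ m :=
        pow_le_pow_left₀ (Finset.sum_nonneg fun _ _ => (Real.exp_pos _).le) h2 m
    _ = _ := by
      rw [mul_pow, ← Real.exp_nat_mul]; congr 2; ring

lemma hoeffding (A : Finset G) (Z : G → ℝ) (hZ : ∀ a ∈ A, |Z a| ≤ 1) (h0 : ∑ a ∈ A, Z a = 0)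
    (e : ℝ) (he : 0 ≤ e) (m : ℕ) :
    (((Fintype.piFinset (fun _ : Fin m => A)).filter fun y => e * m < |∑ i, Z (y i)|).card : ℝ) ≤
      2 * Real.exp (-(e ^ 2 * m / 2)) * (A.card : ℝ) ^ m := by
  have h1 := mgf_bound A Z hZ h0 e m
  have h2 := mgf_bound A Z hZ h0 (-e) m
  have h3 : (((Fintype.piFinset (fun _ : Fin m => A)).filter
      fun y => e * m < |∑ i, Z (y i)|).card : ℝ) * Real.exp (e ^ 2 * m) ≤
      ∑ y ∈ Fintype.piFinset (fun _ : Fin m => A),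
        (Real.exp (e * ∑ i, Z (y i)) + Real.exp (-e * ∑ i, Z (y i))) := by
    rw [← nsmul_eq_mul, ← Finset.sum_const, Finset.sum_filter]
    refine Finset.sum_le_sum fun y _ => ?_
    split_ifs with h
    · rcases le_total 0 (∑ i, Z (y i)) with hs | hs
      · rw [abs_of_nonneg hs] at h
        have : Real.exp (e ^ 2 * m) ≤ Real.exp (e * ∑ i, Z (y i)) := by
          apply Real.exp_le_exp.2; nlinarith
        have := Real.exp_pos (-e * ∑ i, Z (y i))
        linarith
      · rw [abs_of_nonpos hs] at h
        have : Real.exp (e ^ 2 * m) ≤ Real.exp (-e * ∑ i, Z (y i)) := by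
          apply Real.exp_le_exp.2; nlinarith
        have := Real.exp_pos (e * ∑ i, Z (y i))
        linarith
    · positivity
  rw [Finset.sum_add_distrib] at h3
  rw [neg_sq] at h2
  have h4 : Real.exp (e ^ 2 * m) * Real.exp (-(e ^ 2 * m / 2)) = Real.exp (e ^ 2 * m / 2) := by
    rw [← Real.exp_add]; congr 1; ring
  have h5 := Real.exp_pos (e ^ 2 * m)
  refine le_of_mul_le_mul_right (?_ : _ * Real.exp (e ^ 2 * m) ≤ _ * Real.exp (e ^ 2 * m)) h5
  rw [show 2 * Real.exp (-(e ^ 2 * m / 2)) * (A.card : ℝ) ^ m * Real.exp (e ^ 2 * m) =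
    2 * (Real.exp (e ^ 2 * m) * Real.exp (-(e ^ 2 * m / 2))) * (A.card : ℝ) ^ m by ring, h4]
  linarith

/-- average of the indicator of `S` over translates by `A` -/
noncomputable def kav (S A : Finset G) (x : G) : ℝ := (∑ y ∈ A, ind S (x - y)) / A.card

lemma kav_nonneg (S A : Finset G) (x : G) : 0 ≤ kav S A x :=
  div_nonneg (Finset.sum_nonneg fun _ _ => ind_nonneg _ _) (by positivity)

lemma kav_le_one (S A : Finset G) (x : G) : kav S A x ≤ 1 := by
  unfold kav
  apply div_le_one_of_le₀ _ (by positivity)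
  calc _ ≤ ∑ y ∈ A, (1 : ℝ) := Finset.sum_le_sum fun _ _ => ind_le_one _ _
    _ = _ := by simp

lemma croot_sisask (S A T U R : Finset G) (hA : A.Nonempty)
    (hU : ∀ a ∈ A, ∀ t ∈ T, a + t ∈ U) (hR : ∀ s ∈ S, ∀ a ∈ A, s + a ∈ R)
    (e : ℝ) (he : 0 < e) (m : ℕ) (hm : 0 < m) :
    ∃ X ⊆ T, (A.card : ℝ) ^ m * T.card ≤ 2 * X.card * (U.card : ℝ) ^ m ∧
      ∀ t ∈ X, ∀ t' ∈ X,
        ((univ.filter fun x => 2 * e < |kav S A (x - t) - kav S A (x - t')|).card : ℝ) ≤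
          8 * Real.exp (-(e ^ 2 * m / 2)) * R.card := by
  set E := Real.exp (-(e ^ 2 * m / 2)) with hE
  have hE0 : 0 < E := Real.exp_pos _
  have hAc : (0 : ℝ) < A.card := by exact_mod_cast hA.card_pos
  set P := Fintype.piFinset (fun _ : Fin m => A) with hP
  have hPc : (P.card : ℝ) = (A.card : ℝ) ^ m := by simp [hP, Fintype.card_piFinset]
  set D : (Fin m → G) → Finset G := fun y =>
    univ.filter fun x => e * m < |∑ i, (ind S (x - y i) - kav S A x)| with hD
  have hsum : ∑ y ∈ P, ((D y).card : ℝ) ≤ 2 * E * (A.card : ℝ) ^ m * R.card := by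
    have e1 : ∑ y ∈ P, ((D y).card : ℝ) = ∑ x : G, ((P.filter fun y =>
        e * m < |∑ i, (ind S (x - y i) - kav S A x)|).card : ℝ) := by
      simp only [hD, Finset.card_filter, Nat.cast_sum]
      rw [Finset.sum_comm]
    rw [e1]
    have e2 : ∀ x ∉ R, ((P.filter fun y =>
        e * m < |∑ i, (ind S (x - y i) - kav S A x)|).card : ℝ) = 0 := by
      intro x hx
      have z1 : ∀ a ∈ A, ind S (x - a) = 0 := by
        intro a ha
        unfold ind
        rw [if_neg]
        intro h
        apply hx
        simpa using hR _ h a ha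
      have z2 : kav S A x = 0 := by
        unfold kav
        rw [Finset.sum_eq_zero z1, zero_div]
      rw [Nat.cast_eq_zero, Finset.card_eq_zero, Finset.filter_eq_empty_iff]
      intro y hy
      rw [hP, Fintype.mem_piFinset] at hy
      have : ∑ i, (ind S (x - y i) - kav S A x) = 0 :=
        Finset.sum_eq_zero fun i _ => by rw [z1 _ (hy i), z2, sub_zero]
      rw [this]
      simp
      positivity
    rw [← Finset.sum_subset (Finset.subset_univ R) (fun x _ hx => e2 x hx)]
    calc _ ≤ ∑ x ∈ R, 2 * E * (A.card : ℝ) ^ m := by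
          refine Finset.sum_le_sum fun x _ => ?_
          have := hoeffding A (fun a => ind S (x - a) - kav S A x) ?_ ?_ e he.le m
          · simpa [hE] using this
          · intro a _
            rw [abs_le]
            have := ind_nonneg S (x - a)
            have := ind_le_one S (x - a)
            have := kav_nonneg S A x
            have := kav_le_one S A x
            constructor <;> linarith
          · rw [Finset.sum_sub_distrib, Finset.sum_const, nsmul_eq_mul]
            unfold kav
            field_simp
            simp
      _ = _ := by rw [Finset.sum_const, nsmul_eq_mul]; ring
  set Y := P.filter fun y => ((D y).card : ℝ) ≤ 4 * E * R.card with hY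
  have hYc : (A.card : ℝ) ^ m ≤ 2 * Y.card := by
    have h2 := Finset.card_filter_add_card_filter_not (s := P)
      (fun y => ((D y).card : ℝ) ≤ 4 * E * R.card)
    have h3 : (Y.card : ℝ) + ((P.filter fun y => ¬ ((D y).card : ℝ) ≤ 4 * E * R.card).card : ℝ)
      = (A.card : ℝ) ^ m := by rw [← hPc, ← h2]; push_cast; rfl
    rcases Nat.eq_zero_or_pos R.card with hR0 | hR0
    · have h4 : ∑ y ∈ P, ((D y).card : ℝ) ≤ 0 := by rw [hR0] at hsum; simpa using hsum
      have h5 : (P.filter fun y => ¬ ((D y).card : ℝ) ≤ 4 * E * R.card) = ∅ := by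
        rw [Finset.filter_eq_empty_iff]
        intro y hy
        rw [not_not, hR0]
        have := Finset.single_le_sum (f := fun y => ((D y).card : ℝ)) (fun y _ => by positivity) hy
        simp only [Nat.cast_zero, mul_zero]
        linarith
      rw [h5] at h3
      simp at h3
      have : (0 : ℝ) ≤ Y.card := by positivity
      linarith
    · have hRp : (0 : ℝ) < R.card := by exact_mod_cast hR0
      have h6 : ((P.filter fun y => ¬ ((D y).card : ℝ) ≤ 4 * E * R.card).card : ℝ) * (4 * E * R.card)
          ≤ ∑ y ∈ P, ((D y).card : ℝ) := by
        rw [← nsmul_eq_mul, ← Finset.sum_const, Finset.sum_filter]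
        refine Finset.sum_le_sum fun y _ => ?_
        by_cases h : ((D y).card : ℝ) ≤ 4 * E * R.card
        · rw [if_neg (not_not.2 h)]; positivity
        · rw [if_pos h]; exact (not_le.1 h).le
      have h7 : ((P.filter fun y => ¬ ((D y).card : ℝ) ≤ 4 * E * R.card).card : ℝ) * 2 ≤
          (A.card : ℝ) ^ m := by
        have : 0 < 2 * E * R.card := by positivity
        refine le_of_mul_le_mul_right ?_ this
        linarith
      linarith
  -- pigeonhole
  set PU := Fintype.piFinset (fun _ : Fin m => U) with hPU
  have hPUc : (PU.card : ℝ) = (U.card : ℝ) ^ m := by simp [hPU, Fintype.card_piFinset]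
  set X : (Fin m → G) → Finset G := fun v => T.filter fun t => (fun i => v i - t) ∈ Y with hX
  have hdc : (Y.card : ℝ) * T.card = ∑ v ∈ PU, ((X v).card : ℝ) := by
    have e1 : ∑ v ∈ PU, ((X v).card : ℝ) = ∑ t ∈ T, ((PU.filter fun v =>
        (fun i => v i - t) ∈ Y).card : ℝ) := by
      simp only [hX, Finset.card_filter, Nat.cast_sum]
      rw [Finset.sum_comm]
    rw [e1]
    have e2 : ∀ t ∈ T, ((PU.filter fun v => (fun i => v i - t) ∈ Y).card : ℝ) = Y.card := by
      intro t ht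
      norm_cast
      apply Finset.card_bij (fun v _ => fun i => v i - t)
      · intro v hv
        exact (Finset.mem_filter.1 hv).2
      · intro v _ v' _ h
        funext i
        have := congrFun h i
        simpa using this
      · intro y hy
        refine ⟨fun i => y i + t, ?_, ?_⟩
        · rw [Finset.mem_filter]
          refine ⟨?_, by simpa using hy⟩
          rw [hPU, Fintype.mem_piFinset]
          intro i
          have := (Finset.mem_filter.1 hy).1
          rw [hP, Fintype.mem_piFinset] at this
          exact hU _ (this i) t ht
        · simp
    rw [Finset.sum_congr rfl e2, Finset.sum_const, nsmul_eq_mul]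
    ring
  have hex : ∃ v, (A.card : ℝ) ^ m * T.card ≤ 2 * (X v).card * (U.card : ℝ) ^ m := by
    by_contra hcon
    push Not at hcon
    rcases Finset.eq_empty_or_nonempty T with hT | hT
    · have := hcon (fun _ => 0)
      rw [hT] at this
      simp at this
      have h1 : (0 : ℝ) ≤ 2 * (X (fun _ => 0)).card * (U.card : ℝ) ^ m := by positivity
      linarith
    · have hTc : (0 : ℝ) < T.card := by exact_mod_cast hT.card_pos
      have hPUne : PU.Nonempty := by
        obtain ⟨t, ht⟩ := hT
        obtain ⟨a, ha⟩ := hA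
        exact ⟨fun _ => a + t, by rw [hPU, Fintype.mem_piFinset]; exact fun _ => hU a ha t ht⟩
      have := Finset.sum_lt_sum_of_nonempty hPUne (fun v _ => hcon v)
      rw [Finset.sum_const, nsmul_eq_mul, ← Finset.sum_mul, ← Finset.mul_sum, ← hdc, hPUc] at this
      have hUp : (0 : ℝ) < (U.card : ℝ) ^ m := by
        rw [← hPUc]; exact_mod_cast hPUne.card_pos
      have h9 : 2 * ((Y.card : ℝ) * T.card) < (A.card : ℝ) ^ m * T.card := by
        refine lt_of_mul_lt_mul_right ?_ hUp.le
        linarith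
      nlinarith
  obtain ⟨v, hv⟩ := hex
  refine ⟨X v, Finset.filter_subset _ _, hv, ?_⟩
  have hDt : ∀ t ∈ X v, ((univ.filter fun x =>
      e * m < |∑ i, (ind S (x - v i) - kav S A (x - t))|).card : ℝ) ≤ 4 * E * R.card := by
    intro t ht
    have h1 := (Finset.mem_filter.1 ((Finset.mem_filter.1 ht).2)).2
    refine le_trans (le_of_eq ?_) h1
    norm_cast
    apply Finset.card_bij (fun x _ => x - t)
    · intro x hx
      rw [hD, Finset.mem_filter]
      refine ⟨Finset.mem_univ _, ?_⟩
      have := (Finset.mem_filter.1 hx).2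
      simpa using this
    · intro x _ x' _ h
      simpa using h
    · intro x hx
      refine ⟨x + t, ?_, by simp⟩
      rw [Finset.mem_filter]
      refine ⟨Finset.mem_univ _, ?_⟩
      rw [hD, Finset.mem_filter] at hx
      have := hx.2
      have e : ∀ i, x + t - v i = x - (v i - t) := fun i => by abel
      simpa [e] using this
  intro t ht t' ht'
  have h1 := hDt t ht
  have h2 := hDt t' ht'
  have hsub : (univ.filter fun x => 2 * e < |kav S A (x - t) - kav S A (x - t')|) ⊆
      (univ.filter fun x => e * m < |∑ i, (ind S (x - v i) - kav S A (x - t))|) ∪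
      (univ.filter fun x => e * m < |∑ i, (ind S (x - v i) - kav S A (x - t'))|) := by
    intro x hx
    rw [Finset.mem_union, Finset.mem_filter, Finset.mem_filter]
    by_contra hcon
    push Not at hcon
    have c1 := hcon.1 (Finset.mem_univ _)
    have c2 := hcon.2 (Finset.mem_univ _)
    have c3 := (Finset.mem_filter.1 hx).2
    rw [Finset.sum_sub_distrib, Finset.sum_const, Finset.card_univ, Fintype.card_fin,
      nsmul_eq_mul] at c1 c2
    have hmp : (0 : ℝ) < m := by exact_mod_cast hm
    have c4 : m * |kav S A (x - t) - kav S A (x - t')| ≤ 2 * e * m := by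
      rw [← abs_of_pos hmp, ← abs_mul, abs_of_pos hmp]
      rw [abs_le] at c1 c2 ⊢
      constructor <;> nlinarith [c1.1, c1.2, c2.1, c2.2]
    nlinarith
  have h3 := (Finset.card_le_card hsub).trans (Finset.card_union_le _ _)
  have h4 : ((univ.filter fun x => 2 * e < |kav S A (x - t) - kav S A (x - t')|).card : ℝ) ≤
      ((univ.filter fun x => e * m < |∑ i, (ind S (x - v i) - kav S A (x - t))|).card : ℝ) +
      ((univ.filter fun x => e * m < |∑ i, (ind S (x - v i) - kav S A (x - t'))|).card : ℝ) := by
    exact_mod_cast h3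
  linarith

end crootsisask

end KM

set_option linter.unusedSectionVars false
set_option linter.unusedVariables false

open Finset

namespace KM

section fourier

variable {G : Type} [AddCommGroup G] [Fintype G] [DecidableEq G]

noncomputable def fhat (S : Finset G) (γ : AddChar G ℂ) : ℂ := ∑ s ∈ S, γ s

lemma fhat_le (S : Finset G) (γ : AddChar G ℂ) : ‖fhat S γ‖ ≤ S.card := by
  unfold fhat
  calc _ ≤ ∑ s ∈ S, ‖γ s‖ := norm_sum_le _ _
    _ = _ := by simp

lemma norm_sum_neg (S : Finset G) (γ : AddChar G ℂ) : ‖∑ s ∈ S, γ (-s)‖ = ‖fhat S γ‖ := by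
  unfold fhat
  rw [← Complex.norm_conj (∑ s ∈ S, γ s), map_sum]
  congr 1
  exact Finset.sum_congr rfl fun s _ => AddChar.map_neg_eq_conj _ _

lemma char_sum {ι : Type} (s : Finset ι) (γ : AddChar G ℂ) (u : ι → G) :
    γ (∑ i ∈ s, u i) = ∏ i ∈ s, γ (u i) := by
  classical
  induction s using Finset.induction_on with
  | empty => simp
  | insert a s ha ih => rw [Finset.sum_insert ha, Finset.prod_insert ha, AddChar.map_add_eq_mul, ih]

lemma ind_fourier (S : Finset G) (z : G) :
    (Fintype.card G : ℂ) * (ind S z : ℂ) = ∑ γ : AddChar G ℂ, (∑ s ∈ S, γ (-s)) * γ z := by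
  have h : ∀ γ : AddChar G ℂ, (∑ s ∈ S, γ (-s)) * γ z = ∑ s ∈ S, γ (z - s) := fun γ => by
    rw [Finset.sum_mul]
    refine Finset.sum_congr rfl fun s _ => ?_
    rw [← AddChar.map_add_eq_mul]; congr 1; abel
  rw [Finset.sum_congr rfl fun γ _ => h γ, Finset.sum_comm]
  have h2 : ∀ s ∈ S, ∑ γ : AddChar G ℂ, γ (z - s) = if z = s then (Fintype.card G : ℂ) else 0 := by
    intro s _
    rw [AddChar.sum_apply_eq_ite]
    simp [sub_eq_zero]
  rw [Finset.sum_congr rfl h2, Finset.sum_ite_eq]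
  unfold ind
  split_ifs <;> simp

lemma parseval (S : Finset G) :
    ∑ γ : AddChar G ℂ, ‖fhat S γ‖ ^ 2 = (Fintype.card G : ℝ) * S.card := by
  have h : ∀ γ : AddChar G ℂ, ((‖fhat S γ‖ ^ 2 : ℝ) : ℂ) = ∑ t ∈ S, (∑ s ∈ S, γ (-s)) * γ t := by
    intro γ
    rw [← Finset.mul_sum]
    have : ∑ s ∈ S, γ (-s) = (starRingEnd ℂ) (fhat S γ) := by
      unfold fhat
      rw [map_sum]
      exact Finset.sum_congr rfl fun s _ => AddChar.map_neg_eq_conj _ _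
    rw [this]
    have := Complex.conj_mul' (fhat S γ)
    push_cast
    rw [← this]; rfl
  have h2 : ((∑ γ : AddChar G ℂ, ‖fhat S γ‖ ^ 2 : ℝ) : ℂ) = (Fintype.card G : ℂ) * S.card := by
    rw [Complex.ofReal_sum, Finset.sum_congr rfl fun γ _ => h γ, Finset.sum_comm,
      Finset.sum_congr rfl fun t _ => (ind_fourier S t).symm, ← Finset.mul_sum]
    congr 1
    have : ∀ t ∈ S, ((ind S t : ℝ) : ℂ) = 1 := fun t ht => by simp [ind, ht]
    rw [Finset.sum_congr rfl this]; simp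
  exact_mod_cast h2

/-- index family for the smoothed convolution -/
def fam (A1 A2 X : Finset G) (K : ℕ) : Finset ((G × G) × ((Fin K → G) × (Fin K → G))) :=
  (A1 ×ˢ A2) ×ˢ (Fintype.piFinset (fun _ : Fin K => X) ×ˢ Fintype.piFinset (fun _ : Fin K => X))

def famq {K : ℕ} (j : (G × G) × ((Fin K → G) × (Fin K → G))) : G :=
  j.1.1 - j.1.2 + ∑ i, (j.2.1 i - j.2.2 i)

lemma fam_card (A1 A2 X : Finset G) (K : ℕ) :
    ((fam A1 A2 X K).card : ℝ) = A1.card * A2.card * (X.card : ℝ) ^ (2 * K) := by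
  unfold fam
  rw [Finset.card_product, Finset.card_product, Finset.card_product, Fintype.card_piFinset,
    Finset.prod_const, Finset.card_univ, Fintype.card_fin]
  push_cast
  ring

lemma sum_pi_char (X : Finset G) (K : ℕ) (γ : AddChar G ℂ) :
    ∑ u ∈ Fintype.piFinset (fun _ : Fin K => X), ∏ i, γ (u i) = (∑ x ∈ X, γ x) ^ K := by
  have := Finset.prod_univ_sum (fun _ : Fin K => X) (fun _ a => γ a)
  rw [Finset.prod_const, Finset.card_univ, Fintype.card_fin] at this
  rw [this]

lemma sum_pi_char' (X : Finset G) (K : ℕ) (γ : AddChar G ℂ) :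
    ∑ u ∈ Fintype.piFinset (fun _ : Fin K => X), ∏ i, γ (-u i) = (∑ x ∈ X, γ (-x)) ^ K := by
  have := Finset.prod_univ_sum (fun _ : Fin K => X) (fun _ a => γ (-a))
  rw [Finset.prod_const, Finset.card_univ, Fintype.card_fin] at this
  rw [this]

lemma fam_char (A1 A2 X : Finset G) (K : ℕ) (γ : AddChar G ℂ) :
    ‖∑ j ∈ fam A1 A2 X K, γ (famq j)‖ = ‖fhat A1 γ‖ * ‖fhat A2 γ‖ * ‖fhat X γ‖ ^ (2 * K) := by
  have h : ∑ j ∈ fam A1 A2 X K, γ (famq j) =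
      ((∑ x ∈ A1, γ x) * (∑ x ∈ A2, γ (-x))) * ((∑ x ∈ X, γ x) ^ K * (∑ x ∈ X, γ (-x)) ^ K) := by
    rw [← sum_pi_char, ← sum_pi_char', Finset.sum_mul_sum, Finset.sum_mul_sum,
      ← Finset.sum_product', ← Finset.sum_product', Finset.sum_mul_sum, ← Finset.sum_product']
    refine Finset.sum_congr rfl fun j _ => ?_
    unfold famq
    rw [AddChar.map_add_eq_mul, sub_eq_add_neg, AddChar.map_add_eq_mul, char_sum,
      ← Finset.prod_mul_distrib]
    congr 1
    refine Finset.prod_congr rfl fun i _ => ?_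
    rw [sub_eq_add_neg, AddChar.map_add_eq_mul]
  rw [h]
  simp only [norm_mul, norm_pow, norm_sum_neg]
  unfold fhat
  ring

lemma fourier_shift (S A1 A2 X : Finset G) (K : ℕ) (b : G) (κ : ℝ) (hκ : 0 ≤ κ)
    (h : ∀ γ : AddChar G ℂ, ‖fhat X γ‖ ^ (2 * K) * ‖γ b - 1‖ ≤ κ * (X.card : ℝ) ^ (2 * K)) :
    |∑ j ∈ fam A1 A2 X K, ind S (famq j + b) - ∑ j ∈ fam A1 A2 X K, ind S (famq j)| ≤
      κ * (X.card : ℝ) ^ (2 * K) * A2.card * ((S.card + A1.card) / 2) := by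
  have hN : (0 : ℝ) < Fintype.card G := by exact_mod_cast Fintype.card_pos
  have key : (Fintype.card G : ℂ) * ((∑ j ∈ fam A1 A2 X K, ind S (famq j + b) -
      ∑ j ∈ fam A1 A2 X K, ind S (famq j) : ℝ) : ℂ) =
      ∑ γ : AddChar G ℂ, (∑ s ∈ S, γ (-s)) * (γ b - 1) * ∑ j ∈ fam A1 A2 X K, γ (famq j) := by
    rw [← Finset.sum_sub_distrib, Complex.ofReal_sum, Finset.mul_sum]
    simp only [Complex.ofReal_sub, mul_sub, ind_fourier, Finset.mul_sum]
    rw [Finset.sum_comm]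
    refine Finset.sum_congr rfl fun j _ => ?_
    rw [← Finset.sum_sub_distrib]
    refine Finset.sum_congr rfl fun γ _ => ?_
    rw [AddChar.map_add_eq_mul]; ring
  have h2 : (Fintype.card G : ℝ) * |∑ j ∈ fam A1 A2 X K, ind S (famq j + b) -
      ∑ j ∈ fam A1 A2 X K, ind S (famq j)| ≤
      ∑ γ : AddChar G ℂ, κ * (X.card : ℝ) ^ (2 * K) * A2.card *
        ((‖fhat S γ‖ ^ 2 + ‖fhat A1 γ‖ ^ 2) / 2) := by
    have : (Fintype.card G : ℝ) * |∑ j ∈ fam A1 A2 X K, ind S (famq j + b) -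
      ∑ j ∈ fam A1 A2 X K, ind S (famq j)| = ‖(Fintype.card G : ℂ) * ((∑ j ∈ fam A1 A2 X K, ind S (famq j + b) -
      ∑ j ∈ fam A1 A2 X K, ind S (famq j) : ℝ) : ℂ)‖ := by
      rw [norm_mul, Complex.norm_real, Real.norm_eq_abs]; simp
    rw [this, key]
    refine (norm_sum_le _ _).trans (Finset.sum_le_sum fun γ _ => ?_)
    rw [norm_mul, norm_mul, norm_sum_neg, fam_char]
    have e1 := h γ
    have e2 := fhat_le A2 γ
    have e3 : ‖fhat S γ‖ * ‖fhat A1 γ‖ ≤ (‖fhat S γ‖ ^ 2 + ‖fhat A1 γ‖ ^ 2) / 2 := by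
      nlinarith [sq_nonneg (‖fhat S γ‖ - ‖fhat A1 γ‖)]
    calc _ = (‖fhat X γ‖ ^ (2 * K) * ‖γ b - 1‖) * ‖fhat A2 γ‖ * (‖fhat S γ‖ * ‖fhat A1 γ‖) := by ring
      _ ≤ _ := by gcongr
  rw [← Finset.mul_sum, ← Finset.sum_div, Finset.sum_add_distrib, parseval, parseval] at h2
  have h3 : κ * (X.card : ℝ) ^ (2 * K) * A2.card *
      (((Fintype.card G : ℝ) * S.card + (Fintype.card G : ℝ) * A1.card) / 2) =
      (Fintype.card G : ℝ) * (κ * (X.card : ℝ) ^ (2 * K) * A2.card * ((S.card + A1.card) / 2)) := by ring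
  rw [h3] at h2
  exact le_of_mul_le_mul_left h2 hN

end fourier

end KM

set_option linter.unusedSectionVars false
set_option linter.unusedVariables false

open Finset

namespace KM

section approxper

variable {G : Type} [AddCommGroup G] [Fintype G] [DecidableEq G]

noncomputable def nbad (k : G → ℝ) (e : ℝ) (τ : G) : ℝ :=
  ((univ.filter fun x => e < |k (x + τ) - k x|).card : ℝ)

lemma nbad_add (k : G → ℝ) (e1 e2 : ℝ) (τ1 τ2 : G) :
    nbad k (e1 + e2) (τ1 + τ2) ≤ nbad k e1 τ1 + nbad k e2 τ2 := by
  unfold nbad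
  have h : (univ.filter fun x => e1 + e2 < |k (x + (τ1 + τ2)) - k x|) ⊆
      ((univ.filter fun x => e1 < |k (x + τ1) - k x|).image fun x => x - τ2) ∪
      (univ.filter fun x => e2 < |k (x + τ2) - k x|) := by
    intro x hx
    simp only [mem_filter, mem_univ, true_and, mem_union, mem_image] at hx ⊢
    by_cases h2 : e2 < |k (x + τ2) - k x|
    · exact Or.inr h2
    · left
      refine ⟨x + τ2, ?_, by abel⟩
      have : x + τ2 + τ1 = x + (τ1 + τ2) := by abel
      rw [this]
      have := abs_sub_le (k (x + (τ1 + τ2))) (k (x + τ2)) (k x)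
      linarith
  have h1 := Finset.card_le_card h
  have h2 := Finset.card_union_le ((univ.filter fun x => e1 < |k (x + τ1) - k x|).image fun x => x - τ2)
      (univ.filter fun x => e2 < |k (x + τ2) - k x|)
  have h3 := Finset.card_image_le (s := univ.filter fun x => e1 < |k (x + τ1) - k x|) (f := fun x => x - τ2)
  exact_mod_cast h1.trans (h2.trans (by omega))

lemma nbad_sum {ι : Type} (s : Finset ι) (k : G → ℝ) (e Θ : ℝ) (τ : ι → G)
    (h : ∀ i ∈ s, nbad k e (τ i) ≤ Θ) :
    nbad k (s.card * e) (∑ i ∈ s, τ i) ≤ s.card * Θ := by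
  classical
  induction s using Finset.induction_on with
  | empty => simp [nbad]
  | insert a s ha ih =>
    rw [Finset.sum_insert ha, Finset.card_insert_of_notMem ha]
    have h1 := nbad_add k e (s.card * e) (τ a) (∑ i ∈ s, τ i)
    have h2 := ih fun i hi => h i (Finset.mem_insert_of_mem hi)
    have h3 := h a (Finset.mem_insert_self _ _)
    have e1 : e + s.card * e = ((s.card + 1 : ℕ) : ℝ) * e := by push_cast; ring
    rw [e1] at h1
    push_cast at h1 ⊢
    linarith

lemma nbad_sub (k : G → ℝ) (e : ℝ) (t t' : G) :
    nbad k e (t - t') ≤ ((univ.filter fun x => e < |k (x - t) - k (x - t')|).card : ℝ) := by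
  unfold nbad
  norm_cast
  refine Finset.card_le_card_of_injOn (fun x => x + t) ?_ (fun x _ y _ h => add_right_cancel h)
  intro x hx
  simp only [coe_filter, mem_univ, true_and, Set.mem_setOf_eq] at hx ⊢
  have e1 : x + t - t = x := by abel
  have e2 : x + t - t' = x + (t - t') := by abel
  rw [e1, e2, abs_sub_comm]
  exact hx

lemma sum_shift_ge (k : G → ℝ) (h0 : ∀ x, 0 ≤ k x) (h1 : ∀ x, k x ≤ 1) (A : Finset G) (e : ℝ) (he : 0 ≤ e)
    (τ : G) :
    ∑ x ∈ A, k x - e * A.card - nbad k e τ ≤ ∑ x ∈ A, k (x + τ) := by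
  have h : ∀ x ∈ A, k x - e - (if e < |k (x + τ) - k x| then (1 : ℝ) else 0) ≤ k (x + τ) := by
    intro x _
    split_ifs with hh
    · linarith [h0 (x + τ), h1 x]
    · have := neg_abs_le (k (x + τ) - k x)
      linarith
  have h2 := Finset.sum_le_sum h
  rw [Finset.sum_sub_distrib, Finset.sum_sub_distrib, Finset.sum_const, nsmul_eq_mul] at h2
  have h3 : ∑ x ∈ A, (if e < |k (x + τ) - k x| then (1 : ℝ) else 0) ≤ nbad k e τ := by
    unfold nbad
    calc _ ≤ ∑ x : G, (if e < |k (x + τ) - k x| then (1 : ℝ) else 0) :=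
          Finset.sum_le_univ_sum_of_nonneg fun x => by split_ifs <;> norm_num
      _ = _ := by simp
  linarith

def mAP (k : ℕ) : ℕ := 80000 * (k + 5) ^ 2 * (2 * k + 16)
def nAP (k : ℕ) : ℕ := (k + 1) * mAP k + 1

lemma exp_nat_ge (n : ℕ) : (2 : ℝ) ^ n ≤ Real.exp n := by
  have : Real.exp n = Real.exp 1 ^ n := by rw [← Real.exp_nat_mul]; simp
  rw [this]
  have := Real.add_one_le_exp (1 : ℝ)
  gcongr
  linarith

lemma ap_theta (k : ℕ) :
    8 * Real.exp (-((1 / (200 * ((k : ℝ) + 5))) ^ 2 * (mAP k : ℕ) / 2)) * (2 * 2 ^ k) * (k + 5) ≤ 0.01 := by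
  have e1 : (1 / (200 * ((k : ℝ) + 5))) ^ 2 * (mAP k : ℕ) / 2 = ((2 * k + 16 : ℕ) : ℝ) := by
    unfold mAP
    push_cast
    field_simp
    ring
  rw [e1, Real.exp_neg]
  have h := exp_nat_ge (2 * k + 16)
  have hp := Real.exp_pos ((2 * k + 16 : ℕ) : ℝ)
  have h2 : (k : ℝ) + 5 ≤ 2 ^ (k + 5) := by
    have : k + 5 < 2 ^ (k + 5) := Nat.lt_two_pow_self
    exact_mod_cast this.le
  have h3 : (2 : ℝ) ^ (2 * k + 16) = 2048 * (2 ^ k * 2 ^ (k + 5)) := by ring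
  have h4 : (2 : ℝ) ^ k * (k + 5) ≤ 2 ^ k * 2 ^ (k + 5) := by gcongr
  have h5 : 2048 * ((2 : ℝ) ^ k * (k + 5)) ≤ Real.exp ((2 * k + 16 : ℕ) : ℝ) := by linarith
  have : 8 * (Real.exp ((2 * k + 16 : ℕ) : ℝ))⁻¹ * (2 * 2 ^ k) * ((k : ℝ) + 5) =
     (16 * (2 ^ k * (k + 5))) / Real.exp ((2 * k + 16 : ℕ) : ℝ) := by
    field_simp; ring
  rw [this, div_le_iff₀ hp]
  have : (0 : ℝ) ≤ 2 ^ k * (k + 5) := by positivity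
  linarith

lemma fam_sum_ge (S A1 A2 X : Finset G) (hA2 : A2.Nonempty) (K : ℕ) (e Θ : ℝ) (he : 0 ≤ e)
    (hX : ∀ t ∈ X, ∀ t' ∈ X, nbad (kav S A2) e (t - t') ≤ Θ) :
    (X.card : ℝ) ^ (2 * K) * A2.card * (∑ x ∈ A1, kav S A2 x - K * e * A1.card - K * Θ) ≤
      ∑ j ∈ fam A1 A2 X K, ind S (famq j) := by
  have hA2' : (A2.card : ℝ) ≠ 0 := by
    have := hA2.card_pos
    positivity
  unfold fam
  rw [Finset.sum_product, Finset.sum_comm]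
  have h : ∀ uu ∈ (Fintype.piFinset (fun _ : Fin K => X) ×ˢ Fintype.piFinset (fun _ : Fin K => X)),
      A2.card * (∑ x ∈ A1, kav S A2 x - K * e * A1.card - K * Θ) ≤
      ∑ z ∈ A1 ×ˢ A2, ind S (famq (z, uu)) := by
    intro uu huu
    simp only [mem_product, Fintype.mem_piFinset] at huu
    have hb := nbad_sum (univ : Finset (Fin K)) (kav S A2) e Θ (fun i => uu.1 i - uu.2 i)
      (fun i _ => hX _ (huu.1 i) _ (huu.2 i))
    rw [Finset.card_univ, Fintype.card_fin] at hb
    have h1 := sum_shift_ge (kav S A2) (kav_nonneg S A2) (kav_le_one S A2) A1 (K * e) (by positivity)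
      (∑ i, (uu.1 i - uu.2 i))
    have h2 : ∑ z ∈ A1 ×ˢ A2, ind S (famq (z, uu)) =
        A2.card * ∑ x ∈ A1, kav S A2 (x + ∑ i, (uu.1 i - uu.2 i)) := by
      rw [Finset.sum_product, Finset.mul_sum]
      refine Finset.sum_congr rfl fun x _ => ?_
      unfold kav famq
      rw [mul_div_cancel₀ _ hA2']
      refine Finset.sum_congr rfl fun y _ => ?_
      congr 1
      dsimp only
      abel
    rw [h2]
    gcongr
    linarith
  have h2 := Finset.sum_le_sum h
  rw [Finset.sum_const, nsmul_eq_mul, Finset.card_product, Fintype.card_piFinset,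
    Finset.prod_const, Finset.card_univ, Fintype.card_fin] at h2
  refine le_trans (le_of_eq ?_) h2
  push_cast
  ring

theorem almost_periodic (S A1 A2 T T2 T3 U R : Finset G) (k : ℕ) (hA1 : A1.Nonempty) (hA2 : A2.Nonempty)
    (hT3 : T3.Nonempty)
    (d1 : (T.card : ℝ) ≤ 2 ^ k * A1.card) (d2 : (T2.card : ℝ) ≤ 2 ^ k * A2.card)
    (hS : (S.card : ℝ) ≤ 2 * T.card) (hR : ∀ s ∈ S, ∀ a ∈ A2, s + a ∈ R) (hR2 : (R.card : ℝ) ≤ 2 * T.card)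
    (hU : ∀ a ∈ A2, ∀ t ∈ T3, a + t ∈ U) (hU2 : (U.card : ℝ) ≤ 2 * T2.card)
    (hgood : 0.99 * (A1.card * A2.card : ℝ) ≤ ∑ x ∈ A1, ∑ y ∈ A2, ind S (x - y)) :
    ∃ X ⊆ T3, (T3.card : ℝ) ≤ 2 ^ nAP k * X.card ∧
      ∀ b, (∀ γ : AddChar G ℂ, (X.card : ℝ) / 2 ≤ ‖fhat X γ‖ → ‖γ b - 1‖ ≤ (1 / 2 : ℝ) ^ (k + 8)) →
        0.96 * ((fam A1 A2 X (k + 5)).card : ℝ) ≤ ∑ j ∈ fam A1 A2 X (k + 5), ind S (famq j + b) := by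
  have hm : 0 < mAP k := by unfold mAP; positivity
  have a2pos : (0 : ℝ) < A2.card := by exact_mod_cast hA2.card_pos
  have a1pos : (0 : ℝ) < A1.card := by exact_mod_cast hA1.card_pos
  obtain ⟨X, hXT, hXc, hX⟩ := croot_sisask S A2 T3 U R hA2 hU hR (1 / (200 * ((k : ℝ) + 5)))
    (by positivity) (mAP k) hm
  refine ⟨X, hXT, ?_, ?_⟩
  · have hU3 : (U.card : ℝ) ≤ 2 ^ (k + 1) * A2.card := by
      calc _ ≤ 2 * (T2.card : ℝ) := hU2
        _ ≤ 2 * (2 ^ k * A2.card) := by gcongr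
        _ = _ := by ring
    have h1 : (A2.card : ℝ) ^ mAP k * T3.card ≤ (A2.card : ℝ) ^ mAP k * (2 ^ nAP k * X.card) := by
      calc _ ≤ 2 * X.card * (U.card : ℝ) ^ mAP k := hXc
        _ ≤ 2 * X.card * (2 ^ (k + 1) * A2.card : ℝ) ^ mAP k := by gcongr
        _ = _ := by unfold nAP; rw [mul_pow, ← pow_mul, pow_succ]; ring
    exact le_of_mul_le_mul_left h1 (by positivity)
  · intro b hb
    have hF := fourier_shift S A1 A2 X (k + 5) b ((1 / 2) ^ (k + 8)) (by positivity) (by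
      intro γ
      by_cases hγ : (X.card : ℝ) / 2 ≤ ‖fhat X γ‖
      · rw [mul_comm]
        have := fhat_le X γ
        gcongr
        exact hb γ hγ
      · push Not at hγ
        have h1 : ‖γ b - 1‖ ≤ 2 := by
          calc _ ≤ ‖γ b‖ + ‖(1 : ℂ)‖ := norm_sub_le _ _
            _ = 2 := by simp; norm_num
        calc _ ≤ ((X.card : ℝ) / 2) ^ (2 * (k + 5)) * 2 := by gcongr
          _ = ((1 / 2 : ℝ) ^ (k + 8) * (1 / 2) ^ (k + 1)) * (X.card : ℝ) ^ (2 * (k + 5)) := by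
              rw [div_pow, ← pow_add]
              have : (2 : ℝ) ^ (2 * (k + 5)) = 2 * 2 ^ (k + 8 + (k + 1)) := by ring
              rw [this, one_div, inv_pow]
              field_simp
          _ ≤ ((1 / 2 : ℝ) ^ (k + 8) * 1) * (X.card : ℝ) ^ (2 * (k + 5)) := by
              gcongr
              exact pow_le_one₀ (by norm_num) (by norm_num)
          _ = _ := by ring)
    have hs := fam_sum_ge S A1 A2 X hA2 (k + 5) (2 * (1 / (200 * ((k : ℝ) + 5))))
      (8 * Real.exp (-((1 / (200 * ((k : ℝ) + 5))) ^ 2 * (mAP k : ℕ) / 2)) * R.card) (by positivity)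
      (fun t ht t' ht' => (nbad_sub _ _ _ _).trans (hX t ht t' ht'))
    have hk : (A2.card : ℝ) * ∑ x ∈ A1, kav S A2 x = ∑ x ∈ A1, ∑ y ∈ A2, ind S (x - y) := by
      rw [Finset.mul_sum]
      refine Finset.sum_congr rfl fun x _ => ?_
      unfold kav
      field_simp
    have hT : 0.99 * (A1.card : ℝ) ≤ ∑ x ∈ A1, kav S A2 x := by
      rw [← hk] at hgood
      refine le_of_mul_le_mul_left ?_ a2pos
      linarith
    have hth := ap_theta k
    set E := Real.exp (-((1 / (200 * ((k : ℝ) + 5))) ^ 2 * (mAP k : ℕ) / 2)) with hE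
    have hEp : 0 ≤ E := (Real.exp_pos _).le
    have h1 : ((k + 5 : ℕ) : ℝ) * (8 * E * R.card) ≤ 0.01 * A1.card := by
      calc _ ≤ ((k + 5 : ℕ) : ℝ) * (8 * E * (2 * (2 ^ k * A1.card))) := by
            gcongr
            linarith
        _ = (8 * E * (2 * 2 ^ k) * (k + 5)) * A1.card := by push_cast; ring
        _ ≤ _ := by gcongr
    have h2 : ((k + 5 : ℕ) : ℝ) * (2 * (1 / (200 * ((k : ℝ) + 5)))) = 0.01 := by
      push_cast
      field_simp
      norm_num
    rw [h2] at hs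
    set P := (X.card : ℝ) ^ (2 * (k + 5)) with hP
    have hPp : 0 ≤ P := by positivity
    have h3 : P * A2.card * (0.97 * A1.card) ≤ ∑ j ∈ fam A1 A2 X (k + 5), ind S (famq j) := by
      refine le_trans ?_ hs
      gcongr
      linarith
    have h4 : (1 / 2 : ℝ) ^ (k + 8) * P * A2.card * ((S.card + A1.card) / 2) ≤ P * A2.card * (0.01 * A1.card) := by
      have h5 : (1 / 2 : ℝ) ^ (k + 8) * ((S.card + A1.card) / 2) ≤ 0.01 * A1.card := by
        have h6 : ((S.card : ℝ) + A1.card) / 2 ≤ 1.5 * (2 ^ k * A1.card) := by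
          have : (1 : ℝ) ≤ 2 ^ k := one_le_pow₀ (by norm_num)
          nlinarith
        calc _ ≤ (1 / 2 : ℝ) ^ (k + 8) * (1.5 * (2 ^ k * A1.card)) := by gcongr
          _ = ((1 / 2 : ℝ) ^ k * 2 ^ k) * (1.5 / 256) * A1.card := by ring
          _ = (1.5 / 256) * A1.card := by rw [← mul_pow]; norm_num
          _ ≤ _ := by gcongr; norm_num
      calc _ = P * A2.card * ((1 / 2 : ℝ) ^ (k + 8) * ((S.card + A1.card) / 2)) := by ring
        _ ≤ _ := by gcongr
    have h7 := (abs_le.mp hF).1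
    rw [fam_card, ← hP]
    linarith

end approxper

end KM

set_option linter.unusedSectionVars false
set_option linter.unusedVariables false

open Finset

namespace KM

section chang

variable {G : Type} [AddCommGroup G] [Fintype G] [DecidableEq G]

def sg : Finset ℤ := {-1, 0, 1}

noncomputable def comb {j : ℕ} (lam : Fin j → AddChar G ℂ) (m : Fin j → ℤ) : AddChar G ℂ :=
  ∑ i, m i • lam i

lemma zsmul_app (γ : AddChar G ℂ) (k : ℤ) (x : G) : (k • γ) x = γ x ^ k := by
  exact AddChar.zsmul_apply k γ x

lemma comb_apply {j : ℕ} (lam : Fin j → AddChar G ℂ) (m : Fin j → ℤ) (x : G) :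
    comb lam m x = ∏ i, (lam i x) ^ (m i) := by
  unfold comb
  rw [AddChar.sum_apply]
  exact Finset.prod_congr rfl fun i _ => zsmul_app _ _ _

noncomputable def cf (θ : ℝ) (c : ℂ) (ε : ℤ) : ℂ :=
  if ε = 0 then (Real.cosh θ : ℂ) else if ε = 1 then Real.sinh θ * c / 2
    else Real.sinh θ * (starRingEnd ℂ c) / 2

lemma sum_sg {M : Type*} [AddCommMonoid M] (f : ℤ → M) : ∑ ε ∈ sg, f ε = f (-1) + (f 0 + f 1) := by
  unfold sg
  rw [Finset.sum_insert (by decide), Finset.sum_insert (by decide), Finset.sum_singleton]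

lemma cf_expand (θ : ℝ) (c : ℂ) (γ : AddChar G ℂ) (x : G) :
    ((Real.cosh θ + (c * γ x).re * Real.sinh θ : ℝ) : ℂ) = ∑ ε ∈ sg, cf θ c ε * (γ x) ^ ε := by
  rw [sum_sg]
  have h1 : (γ x) ^ (-1 : ℤ) = (starRingEnd ℂ) (γ x) := by
    rw [zpow_neg_one, ← AddChar.map_neg_eq_conj, AddChar.map_neg_eq_inv]
  rw [h1]
  simp only [cf]
  norm_num
  have h2 : (((c * γ x).re : ℝ) : ℂ) = (c * γ x + (starRingEnd ℂ) (c * γ x)) / 2 := Complex.re_eq_add_conj _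
  simp only [Complex.mul_re, Complex.ofReal_sub, Complex.ofReal_mul, map_mul] at h2
  rw [h2]
  ring

lemma cf_norm (θ : ℝ) (hθ : 0 ≤ θ) (c : ℂ) (hc : ‖c‖ = 1) : ∑ ε ∈ sg, ‖cf θ c ε‖ = Real.exp θ := by
  rw [sum_sg]
  simp only [cf]
  have h1 : 0 ≤ Real.sinh θ := Real.sinh_nonneg_iff.mpr hθ
  have h2 := Real.cosh_pos θ
  norm_num [hc, -Complex.ofReal_cosh, -Complex.ofReal_sinh]
  rw [abs_of_nonneg h1, ← Real.cosh_add_sinh, abs_of_pos h2]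
  ring

def Dissoc (T : Finset G) (τ : ℝ) {j : ℕ} (lam : Fin j → AddChar G ℂ) : Prop :=
  ∀ m ∈ Fintype.piFinset (fun _ : Fin j => sg), m ≠ 0 → ‖fhat T (comb lam m)‖ < τ * T.card

/-- Riesz-type product bound -/
lemma riesz {n : ℕ} (lam : Fin n → AddChar G ℂ) (c : Fin n → ℂ) (hc : ∀ i, ‖c i‖ = 1)
    (U T : Finset G) (τ θ : ℝ) (hτ : 0 ≤ τ) (hθ : 0 ≤ θ) (hd : Dissoc T τ lam) :
    ∑ u ∈ U, ∑ v ∈ T, ∏ i, (Real.cosh θ + (c i * lam i (u - v)).re * Real.sinh θ) ≤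
      U.card * T.card * (Real.cosh θ ^ n + τ * Real.exp θ ^ n) := by
  have hF : ∀ x : G, ((∏ i, (Real.cosh θ + (c i * lam i x).re * Real.sinh θ) : ℝ) : ℂ) =
      ∑ m ∈ Fintype.piFinset (fun _ : Fin n => sg), (∏ i, cf θ (c i) (m i)) * comb lam m x := by
    intro x
    rw [Complex.ofReal_prod, Finset.prod_congr rfl fun i _ => cf_expand θ (c i) (lam i) x,
      Finset.prod_univ_sum]
    refine Finset.sum_congr rfl fun m _ => ?_
    rw [Finset.prod_mul_distrib, comb_apply]
  have hsum : ((∑ u ∈ U, ∑ v ∈ T, ∏ i, (Real.cosh θ + (c i * lam i (u - v)).re * Real.sinh θ) : ℝ) : ℂ) =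
      ∑ m ∈ Fintype.piFinset (fun _ : Fin n => sg), (∏ i, cf θ (c i) (m i)) *
        (fhat U (comb lam m) * ∑ v ∈ T, comb lam m (-v)) := by
    rw [Complex.ofReal_sum]
    simp only [Complex.ofReal_sum, hF]
    rw [Finset.sum_congr rfl fun u _ => Finset.sum_comm, Finset.sum_comm]
    refine Finset.sum_congr rfl fun m _ => ?_
    unfold fhat
    rw [Finset.sum_mul_sum, Finset.mul_sum]
    refine Finset.sum_congr rfl fun u _ => ?_
    rw [Finset.mul_sum]
    refine Finset.sum_congr rfl fun v _ => ?_
    rw [sub_eq_add_neg, AddChar.map_add_eq_mul]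
  have hb : ∑ u ∈ U, ∑ v ∈ T, ∏ i, (Real.cosh θ + (c i * lam i (u - v)).re * Real.sinh θ) ≤
      ∑ m ∈ Fintype.piFinset (fun _ : Fin n => sg), (∏ i, ‖cf θ (c i) (m i)‖) *
        (U.card * T.card * ((if m = 0 then 1 else 0) + τ)) := by
    refine (le_abs_self _).trans ?_
    rw [← Real.norm_eq_abs, ← Complex.norm_real, hsum]
    refine (norm_sum_le _ _).trans (Finset.sum_le_sum fun m hm => ?_)
    rw [norm_mul, norm_mul, norm_prod, norm_sum_neg]
    have h1 := fhat_le U (comb lam m)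
    have h2 : ‖fhat T (comb lam m)‖ ≤ T.card * ((if m = 0 then 1 else 0) + τ) := by
      by_cases hm0 : m = 0
      · rw [if_pos hm0]
        have := fhat_le T (comb lam m)
        nlinarith [mul_nonneg (Nat.cast_nonneg (α := ℝ) T.card) hτ]
      · rw [if_neg hm0]
        have := hd m hm hm0
        linarith
    calc _ ≤ (∏ i, ‖cf θ (c i) (m i)‖) * ((U.card : ℝ) * (T.card * ((if m = 0 then 1 else 0) + τ))) := by
          gcongr
      _ = _ := by ring
  refine hb.trans (le_of_eq ?_)
  have h0 : (0 : Fin n → ℤ) ∈ Fintype.piFinset (fun _ : Fin n => sg) := by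
    simp [Fintype.mem_piFinset, sg]
  have hs1 : ∑ m ∈ Fintype.piFinset (fun _ : Fin n => sg), (∏ i, ‖cf θ (c i) (m i)‖) = Real.exp θ ^ n := by
    rw [← Finset.prod_univ_sum (fun _ : Fin n => sg) (fun i ε => ‖cf θ (c i) ε‖),
      Finset.prod_congr rfl fun i _ => cf_norm θ hθ (c i) (hc i)]
    simp
  have hs2 : ∑ m ∈ Fintype.piFinset (fun _ : Fin n => sg), (∏ i, ‖cf θ (c i) (m i)‖) *
      (if m = 0 then 1 else 0) = Real.cosh θ ^ n := by
    simp only [mul_ite, mul_one, mul_zero]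
    rw [Finset.sum_ite_eq' , if_pos h0]
    have : ∀ i : Fin n, ‖cf θ (c i) ((0 : Fin n → ℤ) i)‖ = Real.cosh θ := by
      intro i
      simp only [cf, Pi.zero_apply, if_true]
      rw [Complex.norm_real, Real.norm_eq_abs, abs_of_pos (Real.cosh_pos θ)]
    rw [Finset.prod_congr rfl fun i _ => this i]
    simp
  calc _ = U.card * T.card * (∑ m ∈ Fintype.piFinset (fun _ : Fin n => sg), (∏ i, ‖cf θ (c i) (m i)‖) *
      (if m = 0 then 1 else 0) + τ * ∑ m ∈ Fintype.piFinset (fun _ : Fin n => sg), (∏ i, ‖cf θ (c i) (m i)‖)) := by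
        rw [Finset.mul_sum, ← Finset.sum_add_distrib, Finset.mul_sum]
        refine Finset.sum_congr rfl fun m _ => ?_
        ring
    _ = _ := by rw [hs1, hs2]

lemma exists_phase (z : ℂ) : ∃ c : ℂ, ‖c‖ = 1 ∧ (c * z).re = ‖z‖ := by
  by_cases h : z = 0
  · exact ⟨1, by simp, by simp [h]⟩
  · refine ⟨(starRingEnd ℂ) z / ‖z‖, ?_, ?_⟩
    · rw [norm_div]; simp [h]
    · have hz : (‖z‖ : ℂ) ≠ 0 := by simpa using h
      have : (starRingEnd ℂ) z / ‖z‖ * z = (‖z‖ : ℂ) := by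
        rw [div_mul_eq_mul_div, Complex.conj_mul']
        field_simp
      rw [this, Complex.ofReal_re]

lemma no_dissoc (T3 T4 U X : Finset G) (hT4 : T4.Nonempty) (hX : X ⊆ T3) (hXne : X.Nonempty)
    (hU : ∀ x ∈ T3, ∀ y ∈ T4, x + y ∈ U) (hU2 : (U.card : ℝ) ≤ 2 * T3.card) (n' : ℕ)
    (hXc : (T3.card : ℝ) ≤ 2 ^ n' * X.card) (n : ℕ) (hn : n = 8 * (n' + 3)) (lam : Fin n → AddChar G ℂ)
    (hs : ∀ i, (X.card : ℝ) / 2 ≤ ‖fhat X (lam i)‖)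
    (hd : Dissoc T4 ((1 / 2 : ℝ) ^ n) lam) : False := by
  have hXp : (0 : ℝ) < X.card := by exact_mod_cast hXne.card_pos
  have hT4p : (0 : ℝ) < T4.card := by exact_mod_cast hT4.card_pos
  choose c hc hc2 using fun i => exists_phase (fhat X (lam i))
  have hr := riesz lam c hc U T4 ((1 / 2 : ℝ) ^ n) (1 / 2) (by positivity) (by norm_num) hd
  set F : G → ℝ := fun x => ∏ i, (Real.cosh (1 / 2) + (c i * lam i x).re * Real.sinh (1 / 2)) with hF
  set g : G → ℝ := fun x => ∑ i, (c i * lam i x).re with hg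
  have hfac : ∀ i x, Real.exp ((c i * lam i x).re * (1 / 2)) ≤
      Real.cosh (1 / 2) + (c i * lam i x).re * Real.sinh (1 / 2) := by
    intro i x
    apply Real.exp_mul_le_cosh_add_mul_sinh
    refine (Complex.abs_re_le_norm _).trans ?_
    rw [norm_mul, hc]; simp
  have hFe : ∀ x, Real.exp (g x * (1 / 2)) ≤ F x := by
    intro x
    rw [hg, hF]
    dsimp only
    rw [Finset.sum_mul, Real.exp_sum]
    exact Finset.prod_le_prod (fun i _ => (Real.exp_pos _).le) (fun i _ => hfac i x)
  have hF0 : ∀ x, 0 ≤ F x := fun x => (Real.exp_pos _).le.trans (hFe x)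
  -- majorant
  have hmaj : (T4.card : ℝ) * ∑ x ∈ X, F x ≤ ∑ u ∈ U, ∑ v ∈ T4, F (u - v) := by
    rw [Finset.sum_comm, ← nsmul_eq_mul, ← Finset.sum_const]
    refine Finset.sum_le_sum fun v hv => ?_
    have : ∑ x ∈ X, F x = ∑ u ∈ X.image (fun x => x + v), F (u - v) := by
      rw [Finset.sum_image (fun x _ y _ h => add_right_cancel h)]
      simp
    rw [this]
    refine Finset.sum_le_sum_of_subset_of_nonneg ?_ fun _ _ _ => hF0 _
    intro u hu
    obtain ⟨x, hx, rfl⟩ := Finset.mem_image.mp hu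
    exact hU x (hX hx) v hv
  have hgs : (n : ℝ) * (X.card / 2) ≤ ∑ x ∈ X, g x := by
    rw [hg, Finset.sum_comm]
    have : ∀ i ∈ (univ : Finset (Fin n)), (X.card : ℝ) / 2 ≤ ∑ x ∈ X, (c i * lam i x).re := by
      intro i _
      have := hs i
      rw [← hc2 i] at this
      refine this.trans (le_of_eq ?_)
      unfold fhat
      rw [Finset.mul_sum, Complex.re_sum]
    have := Finset.sum_le_sum this
    simpa using this
  have hjen : (X.card : ℝ) * Real.exp (n / 4) ≤ ∑ x ∈ X, Real.exp (g x * (1 / 2)) := by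
    -- tangent line: exp y ≥ exp a * (1 + (y - a))
    have h1 : ∀ x ∈ X, Real.exp (n / 4) * (1 + (g x * (1 / 2) - n / 4)) ≤ Real.exp (g x * (1 / 2)) := by
      intro x _
      have := Real.add_one_le_exp (g x * (1 / 2) - n / 4)
      calc _ ≤ Real.exp (n / 4) * Real.exp (g x * (1 / 2) - n / 4) := by gcongr; linarith
        _ = _ := by rw [← Real.exp_add]; congr 1; ring
    refine le_trans ?_ (Finset.sum_le_sum h1)
    rw [← Finset.mul_sum, Finset.sum_add_distrib, Finset.sum_sub_distrib, ← Finset.sum_mul]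
    simp only [Finset.sum_const, nsmul_eq_mul]
    have hp := Real.exp_pos ((n : ℝ) / 4)
    rw [mul_comm]
    gcongr
    linarith
  have hup : Real.cosh (1 / 2) ^ n + (1 / 2 : ℝ) ^ n * Real.exp (1 / 2) ^ n ≤ 2 * Real.exp (n / 8) := by
    have h1 : Real.cosh (1 / 2) ^ n ≤ Real.exp (n / 8) := by
      have := Real.cosh_le_exp_half_sq (1 / 2)
      calc _ ≤ Real.exp ((1 / 2) ^ 2 / 2) ^ n := by gcongr
        _ = _ := by rw [← Real.exp_nat_mul]; congr 1; ring
    have h2 : (1 / 2 : ℝ) ^ n * Real.exp (1 / 2) ^ n ≤ 1 := by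
      rw [← mul_pow]
      apply pow_le_one₀ (by positivity)
      have : Real.exp (1 / 2) ≤ 2 := by
        have h3 : Real.exp (1 / 2) ^ 2 = Real.exp 1 := by rw [← Real.exp_nat_mul]; norm_num
        have := Real.exp_one_lt_d9
        nlinarith [Real.exp_pos (1 / 2)]
      linarith
    have h3 : 1 ≤ Real.exp ((n : ℝ) / 8) := Real.one_le_exp (by positivity)
    linarith
  have h1 : (X.card : ℝ) * Real.exp (n / 4) ≤ ∑ x ∈ X, F x := hjen.trans (Finset.sum_le_sum fun x _ => hFe x)
  have hEp := Real.exp_pos ((n : ℝ) / 8)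
  have h2 : (T4.card : ℝ) * (X.card * Real.exp (n / 4)) ≤
      T4.card * (X.card * (2 ^ n' * 4 * Real.exp (n / 8))) := by
    calc _ ≤ (T4.card : ℝ) * ∑ x ∈ X, F x := by gcongr
      _ ≤ _ := hmaj.trans hr
      _ ≤ (2 * (2 ^ n' * X.card)) * T4.card * (2 * Real.exp (n / 8)) := by
        gcongr
        linarith
      _ = _ := by ring
  have h3 : Real.exp (n / 4) ≤ 2 ^ n' * 4 * Real.exp (n / 8) :=
    le_of_mul_le_mul_left (le_of_mul_le_mul_left h2 hT4p) hXp
  have h4 : Real.exp ((n : ℝ) / 4) = Real.exp (n / 8) * Real.exp (n / 8) := by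
    rw [← Real.exp_add]; congr 1; ring
  rw [h4] at h3
  have h5 := le_of_mul_le_mul_right h3 hEp
  have h6 := exp_nat_ge (n' + 3)
  have h7 : ((n : ℝ) / 8) = ((n' + 3 : ℕ) : ℝ) := by rw [hn]; push_cast; ring
  rw [h7] at h5
  have h8 : (2 : ℝ) ^ (n' + 3) = 2 ^ n' * 8 := by ring
  have : (0 : ℝ) < 2 ^ n' := by positivity
  linarith

lemma char_near (T : Finset G) (hT : T.Nonempty) (δ τ : ℝ) (hτ : 0 < τ) (b : G)
    (hb : ((T.filter fun x => x + b ∉ T).card : ℝ) ≤ δ * T.card) (ψ : AddChar G ℂ)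
    (hψ : τ * T.card ≤ ‖fhat T ψ‖) : ‖ψ b - 1‖ ≤ 2 * δ / τ := by
  have hTp : (0 : ℝ) < T.card := by exact_mod_cast hT.card_pos
  have h1 : (ψ b - 1) * fhat T ψ = ∑ x : G, (((ind T (x - b) : ℝ) : ℂ) - (ind T x : ℝ)) * ψ x := by
    have e1 : fhat T ψ = ∑ x : G, ((ind T x : ℝ) : ℂ) * ψ x := by
      unfold fhat
      have : ∀ x : G, ((ind T x : ℝ) : ℂ) * ψ x = if x ∈ T then ψ x else 0 := fun x => by
        unfold ind
        split_ifs <;> simp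
      rw [Finset.sum_congr rfl fun x _ => this x, Finset.sum_ite_mem, Finset.univ_inter]
    have e2 : ψ b * fhat T ψ = ∑ x : G, ((ind T (x - b) : ℝ) : ℂ) * ψ x := by
      rw [e1, ← Equiv.sum_comp (Equiv.addRight b) (fun x => ((ind T (x - b) : ℝ) : ℂ) * ψ x), Finset.mul_sum]
      refine Finset.sum_congr rfl fun x _ => ?_
      simp only [Equiv.coe_addRight, add_sub_cancel_right, AddChar.map_add_eq_mul]
      ring
    rw [sub_mul, e2, one_mul, e1, ← Finset.sum_sub_distrib]
    refine Finset.sum_congr rfl fun x _ => ?_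
    ring
  have h2 : ∑ x : G, |ind T (x - b) - ind T x| ≤ 2 * (δ * T.card) := by
    -- |p - q| = (p - q) + 2 * q(1-p)
    have h3 : ∀ x : G, |ind T (x - b) - ind T x| ≤
        (ind T x - ind T (x - b)) + 2 * (ind T (x - b) * (1 - ind T x)) := by
      intro x
      unfold ind
      split_ifs <;> norm_num
    refine (Finset.sum_le_sum fun x _ => h3 x).trans ?_
    rw [Finset.sum_add_distrib, Finset.sum_sub_distrib]
    have h4 : ∑ x : G, ind T (x - b) = ∑ x, ind T x :=
      Equiv.sum_comp (Equiv.subRight b) (ind T)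
    rw [h4, sub_self, zero_add, ← Finset.mul_sum]
    have h5 : ∑ x : G, ind T (x - b) * (1 - ind T x) = ((T.filter fun x => x + b ∉ T).card : ℝ) := by
      rw [← Equiv.sum_comp (Equiv.addRight b) (fun x => ind T (x - b) * (1 - ind T x))]
      simp only [Equiv.coe_addRight, add_sub_cancel_right]
      rw [sum_ind_mul, Finset.card_filter]
      push_cast
      refine Finset.sum_congr rfl fun x _ => ?_
      unfold ind
      by_cases hx : x + b ∈ T <;> simp [hx]
    rw [h5]
    linarith
  have h3 : ‖ψ b - 1‖ * ‖fhat T ψ‖ ≤ 2 * (δ * T.card) := by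
    rw [← norm_mul, h1]
    refine (norm_sum_le _ _).trans (le_trans (le_of_eq ?_) h2)
    refine Finset.sum_congr rfl fun x _ => ?_
    rw [norm_mul, AddChar.norm_apply, mul_one, ← Complex.ofReal_sub, Complex.norm_real, Real.norm_eq_abs]
  have h4 : (‖ψ b - 1‖ * τ) * T.card ≤ (2 * δ) * T.card := by
    calc _ = ‖ψ b - 1‖ * (τ * T.card) := by ring
      _ ≤ ‖ψ b - 1‖ * ‖fhat T ψ‖ := by gcongr
      _ ≤ _ := by linarith
  rw [le_div_iff₀ hτ]
  exact le_of_mul_le_mul_right h4 hTp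

lemma prod_near {ι : Type} (s : Finset ι) (z : ι → ℂ) (hz : ∀ i ∈ s, ‖z i‖ = 1) :
    ‖∏ i ∈ s, z i - 1‖ ≤ ∑ i ∈ s, ‖z i - 1‖ := by
  classical
  induction s using Finset.induction_on with
  | empty => simp
  | insert a s ha ih =>
    rw [Finset.prod_insert ha, Finset.sum_insert ha]
    have h1 := ih fun i hi => hz i (Finset.mem_insert_of_mem hi)
    have h2 := hz a (Finset.mem_insert_self _ _)
    calc ‖z a * ∏ i ∈ s, z i - 1‖ = ‖z a * (∏ i ∈ s, z i - 1) + (z a - 1)‖ := by congr 1; ring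
      _ ≤ ‖z a * (∏ i ∈ s, z i - 1)‖ + ‖z a - 1‖ := norm_add_le _ _
      _ ≤ _ := by rw [norm_mul, h2]; linarith

lemma sg_near (z : ℂ) (hz : ‖z‖ = 1) (ε : ℤ) (hε : ε ∈ sg) : ‖z ^ ε - 1‖ ≤ ‖z - 1‖ := by
  simp only [sg, Finset.mem_insert, Finset.mem_singleton] at hε
  have hz0 : z ≠ 0 := by intro h; simp [h] at hz
  rcases hε with rfl | rfl | rfl
  · rw [zpow_neg_one]
    have : z⁻¹ - 1 = -(z - 1) * z⁻¹ := by field_simp; ring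
    rw [this, norm_mul, norm_neg, norm_inv, hz]; simp
  · simp
  · simp

theorem chang (T3 T4 U X : Finset G) (hT4 : T4.Nonempty) (hX : X ⊆ T3) (hXne : X.Nonempty)
    (hU : ∀ x ∈ T3, ∀ y ∈ T4, x + y ∈ U) (hU2 : (U.card : ℝ) ≤ 2 * T3.card) (n' : ℕ)
    (hXc : (T3.card : ℝ) ≤ 2 ^ n' * X.card) :
    ∃ Λ : Finset (AddChar G ℂ), Λ.card ≤ 8 * (n' + 3) ∧
      ∀ b : G, ∀ δ ε : ℝ, 0 ≤ ε → ((T4.filter fun x => x + b ∉ T4).card : ℝ) ≤ δ * T4.card →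
        (∀ γ ∈ Λ, ‖γ b - 1‖ ≤ ε) → ∀ γ : AddChar G ℂ, (X.card : ℝ) / 2 ≤ ‖fhat X γ‖ →
          ‖γ b - 1‖ ≤ (8 * (n' + 3) : ℕ) * ε + 2 * δ * 2 ^ (8 * (n' + 3)) := by
  classical
  set n := 8 * (n' + 3) with hn
  let P : ℕ → Prop := fun j => ∃ lam : Fin j → AddChar G ℂ,
    (∀ i, (X.card : ℝ) / 2 ≤ ‖fhat X (lam i)‖) ∧ Dissoc T4 ((1 / 2 : ℝ) ^ n) lam
  have hP0 : P 0 := ⟨Fin.elim0, fun i => i.elim0, fun m _ hm0 => absurd (Subsingleton.elim _ _) hm0⟩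
  have hPn : ¬ P n := by
    rintro ⟨lam, h1, h2⟩
    exact no_dissoc T3 T4 U X hT4 hX hXne hU hU2 n' hXc n hn lam h1 h2
  obtain ⟨j, hjn, hj, hj1⟩ : ∃ j, j < n ∧ P j ∧ ¬ P (j + 1) := by
    by_contra hcon
    push Not at hcon
    have : ∀ i, i ≤ n → P i := by
      intro i
      induction i with
      | zero => exact fun _ => hP0
      | succ i ih => exact fun hi => hcon i (by omega) (ih (by omega))
    exact hPn (this n le_rfl)
  obtain ⟨lam, hspec, hdis⟩ := hj
  refine ⟨univ.image lam, ?_, ?_⟩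
  · refine Finset.card_image_le.trans ?_
    simp; omega
  intro b δ ε hε hb hΛ γ hγ
  have hnd : ¬ Dissoc T4 ((1 / 2 : ℝ) ^ n) (Fin.cons γ lam : Fin (j + 1) → AddChar G ℂ) := by
    intro h
    apply hj1
    refine ⟨Fin.cons γ lam, ?_, h⟩
    intro i
    refine Fin.cases ?_ (fun i => ?_) i
    · simpa using hγ
    · simpa using hspec i
  unfold Dissoc at hnd
  push Not at hnd
  obtain ⟨m, hm, hm0, hbig⟩ := hnd
  have hcomb : comb (Fin.cons γ lam : Fin (j + 1) → AddChar G ℂ) m = m 0 • γ + comb lam (Fin.tail m) := by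
    unfold comb
    rw [Fin.sum_univ_succ]
    simp [Fin.tail]
  have hms : ∀ i, m i ∈ sg := Fintype.mem_piFinset.mp hm
  have htail : Fin.tail m ∈ Fintype.piFinset (fun _ : Fin j => sg) :=
    Fintype.mem_piFinset.mpr fun i => hms _
  have hm00 : m 0 ≠ 0 := by
    intro h0
    have ht0 : Fin.tail m ≠ 0 := by
      intro ht
      apply hm0
      funext i
      refine Fin.cases h0 (fun i => ?_) i
      exact congrFun ht i
    have := hdis _ htail ht0
    have e0 : (0 : ℤ) • γ = 0 := zero_zsmul γ
    rw [hcomb, h0, e0, zero_add] at hbig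
    linarith
  set ψ := comb (Fin.cons γ lam : Fin (j + 1) → AddChar G ℂ) m with hψ
  have h1 := char_near T4 hT4 δ ((1 / 2 : ℝ) ^ n) (by positivity) b hb ψ hbig
  have h1' : 2 * δ / (1 / 2 : ℝ) ^ n = 2 * δ * 2 ^ n := by
    rw [one_div, inv_pow, div_inv_eq_mul]
  rw [h1'] at h1
  have h2 : ‖comb lam (Fin.tail m) b - 1‖ ≤ n * ε := by
    rw [comb_apply]
    refine (prod_near _ _ ?_).trans ?_
    · intro i _
      rw [norm_zpow, AddChar.norm_apply, one_zpow]
    · calc _ ≤ ∑ i : Fin j, ε := Finset.sum_le_sum fun i _ =>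
            (sg_near _ (AddChar.norm_apply _ _) _ (hms _)).trans (hΛ _ (Finset.mem_image_of_mem _ (mem_univ _)))
        _ = j * ε := by simp
        _ ≤ n * ε := by gcongr
  have hψb : ψ b = γ b ^ (m 0) * comb lam (Fin.tail m) b := by
    rw [hcomb, AddChar.add_apply, zsmul_app]
  have hγ0 : γ b ≠ 0 := by
    intro h; have := AddChar.norm_apply γ b; simp [h] at this
  have h3 : ‖γ b ^ (m 0) - 1‖ ≤ n * ε + 2 * δ * 2 ^ n := by
    have hc : ‖comb lam (Fin.tail m) b‖ = 1 := AddChar.norm_apply _ _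
    have hg : ‖γ b ^ (m 0)‖ = 1 := by rw [norm_zpow, AddChar.norm_apply, one_zpow]
    have : γ b ^ (m 0) - 1 = (ψ b - 1) - γ b ^ (m 0) * (comb lam (Fin.tail m) b - 1) := by
      rw [hψb]; ring
    rw [this]
    refine (norm_sub_le _ _).trans ?_
    rw [norm_mul, hg]
    linarith
  have hm1 : m 0 = 1 ∨ m 0 = -1 := by
    have := hms 0
    simp only [sg, Finset.mem_insert, Finset.mem_singleton] at this
    tauto
  rcases hm1 with h | h
  · rw [h, zpow_one] at h3; exact h3
  · have hz : ‖γ b ^ (-1 : ℤ)‖ = 1 := by rw [norm_zpow, AddChar.norm_apply, one_zpow]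
    have := sg_near (γ b ^ (-1 : ℤ)) hz (-1) (by simp [sg])
    rw [h] at h3
    rw [← zpow_mul] at this
    norm_num at this
    rw [zpow_neg_one] at h3
    exact this.trans h3

end chang

end KM

set_option linter.unusedSectionVars false
set_option linter.unusedVariables false

open Finset

namespace KM

section bohrsets

variable {G : Type} [AddCommGroup G] [Fintype G] [DecidableEq G]

open Classical in
noncomputable def bohr (Γ : Finset (AddChar G ℂ)) (r : ℝ) : Finset G :=
  univ.filter fun x => ∀ γ ∈ Γ, ‖γ x - 1‖ ≤ r

lemma mem_bohr {Γ : Finset (AddChar G ℂ)} {r : ℝ} {x : G} :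
    x ∈ bohr Γ r ↔ ∀ γ ∈ Γ, ‖γ x - 1‖ ≤ r := by
  simp [bohr]

lemma zero_mem_bohr {Γ : Finset (AddChar G ℂ)} {r : ℝ} (hr : 0 ≤ r) : (0 : G) ∈ bohr Γ r := by
  rw [mem_bohr]; intro γ _; simpa using hr

lemma bohr_nonempty {Γ : Finset (AddChar G ℂ)} {r : ℝ} (hr : 0 ≤ r) : (bohr Γ r).Nonempty :=
  ⟨0, zero_mem_bohr hr⟩

lemma bohr_mono {Γ : Finset (AddChar G ℂ)} {r s : ℝ} (h : r ≤ s) : bohr Γ r ⊆ bohr Γ s := by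
  intro x hx
  rw [mem_bohr] at hx ⊢
  exact fun γ hγ => (hx γ hγ).trans h

lemma neg_mem_bohr {Γ : Finset (AddChar G ℂ)} {r : ℝ} {x : G} (hx : x ∈ bohr Γ r) : -x ∈ bohr Γ r := by
  rw [mem_bohr] at hx ⊢
  intro γ hγ
  rw [AddChar.map_neg_eq_inv]
  have := sg_near (γ x) (AddChar.norm_apply _ _) (-1) (by simp [sg])
  rw [zpow_neg_one] at this
  exact this.trans (hx γ hγ)

lemma add_mem_bohr {Γ : Finset (AddChar G ℂ)} {r s : ℝ} {x y : G} (hx : x ∈ bohr Γ r) (hy : y ∈ bohr Γ s) :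
    x + y ∈ bohr Γ (r + s) := by
  rw [mem_bohr] at hx hy ⊢
  intro γ hγ
  rw [AddChar.map_add_eq_mul]
  have : γ x * γ y - 1 = γ x * (γ y - 1) + (γ x - 1) := by ring
  rw [this]
  refine (norm_add_le _ _).trans ?_
  rw [norm_mul, AddChar.norm_apply]
  linarith [hx γ hγ, hy γ hγ]

lemma sub_mem_bohr {Γ : Finset (AddChar G ℂ)} {r s : ℝ} {x y : G} (hx : x ∈ bohr Γ r) (hy : y ∈ bohr Γ s) :
    x - y ∈ bohr Γ (r + s) := by
  rw [sub_eq_add_neg]; exact add_mem_bohr hx (neg_mem_bohr hy)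

lemma bohr_size (Γ : Finset (AddChar G ℂ)) (r R : ℝ) (hr : 0 < r) (q : ℕ) (hq : R ≤ q * r) :
    (bohr Γ R).card ≤ ((4 * q + 1) ^ 2) ^ Γ.card * (bohr Γ r).card := by
  classical
  let f : G → (Γ → ℤ × ℤ) := fun x γ => (⌊((γ : AddChar G ℂ) x - 1).re / (r / 2)⌋, ⌊((γ : AddChar G ℂ) x - 1).im / (r / 2)⌋)
  have h1 := Finset.card_le_mul_card_image (f := f) (bohr Γ R) (bohr Γ r).card (by
    intro c hc
    obtain ⟨x0, hx0, rfl⟩ := Finset.mem_image.mp hc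
    refine Finset.card_le_card_of_injOn (fun x => x - x0) ?_ (fun x _ y _ h => sub_left_injective h)
    intro x hx
    have hx' := (Finset.mem_filter.mp (Finset.mem_coe.mp hx)).2
    refine Finset.mem_coe.mpr (mem_bohr.mpr fun γ hγ => ?_)
    have h2 := congrFun hx' ⟨γ, hγ⟩
    simp only [f, Prod.mk.injEq] at h2
    have ha := Int.abs_sub_lt_one_of_floor_eq_floor h2.1
    have hb := Int.abs_sub_lt_one_of_floor_eq_floor h2.2
    rw [← sub_div, abs_div, abs_of_pos (by positivity : 0 < r / 2), div_lt_one (by positivity)] at ha hb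
    have e : γ (x - x0) - 1 = (γ x - γ x0) * γ (-x0) := by
      have : γ x0 * γ (-x0) = 1 := by rw [← AddChar.map_add_eq_mul]; simp
      rw [sub_eq_add_neg x, AddChar.map_add_eq_mul, sub_mul, this]
    rw [e, norm_mul, AddChar.norm_apply, mul_one]
    have := Complex.norm_le_abs_re_add_abs_im (γ x - γ x0)
    have e1 : (γ x - γ x0).re = (γ x - 1).re - (γ x0 - 1).re := by simp
    have e2 : (γ x - γ x0).im = (γ x - 1).im - (γ x0 - 1).im := by simp
    rw [e1, e2] at this
    linarith)
  have h2 : ((bohr Γ R).image f).card ≤ ((4 * q + 1) ^ 2) ^ Γ.card := by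
    have hsub : (bohr Γ R).image f ⊆ Fintype.piFinset (fun _ : Γ =>
        (Finset.Icc (-(2 * q : ℤ)) (2 * q)) ×ˢ (Finset.Icc (-(2 * q : ℤ)) (2 * q))) := by
      intro c hc
      obtain ⟨x, hx, rfl⟩ := Finset.mem_image.mp hc
      rw [Fintype.mem_piFinset]
      intro γ
      have hx' := (mem_bohr.mp hx) γ.1 γ.2
      have hre := (Complex.abs_re_le_norm _).trans hx'
      have him := (Complex.abs_im_le_norm _).trans hx'
      have key : ∀ y : ℝ, |y| ≤ R → -(2 * q : ℤ) ≤ ⌊y / (r / 2)⌋ ∧ ⌊y / (r / 2)⌋ ≤ (2 * q : ℤ) := by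
        intro y hy
        obtain ⟨h3, h4⟩ := abs_le.mp hy
        constructor
        · rw [Int.le_floor, le_div_iff₀ (by positivity)]
          push_cast
          linarith
        · have : y / (r / 2) ≤ ((2 * q : ℤ) : ℝ) := by
            rw [div_le_iff₀ (by positivity)]
            push_cast
            linarith
          have h5 := (Int.floor_le (y / (r / 2))).trans this
          exact_mod_cast h5
      simp only [f, mem_product, Finset.mem_Icc]
      exact ⟨key _ hre, key _ him⟩
    refine (Finset.card_le_card hsub).trans (le_of_eq ?_)
    rw [Fintype.card_piFinset, Finset.prod_const, Finset.card_product, Int.card_Icc, Finset.card_univ,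
      Fintype.card_coe]
    congr 1
    have : (2 * (q : ℤ) + 1 - -(2 * q)).toNat = 4 * q + 1 := by omega
    rw [this]; ring
  calc _ ≤ _ := h1
    _ ≤ (bohr Γ r).card * ((4 * q + 1) ^ 2) ^ Γ.card := by gcongr
    _ = _ := by ring

lemma two_le_pow_aux (a : ℕ) : (2 : ℝ) ≤ (1 + (1 / 2 : ℝ) ^ a) ^ (2 ^ a) := by
  have h := one_add_mul_le_pow (a := (1 / 2 : ℝ) ^ a) (by
    have : (0 : ℝ) ≤ (1 / 2) ^ a := by positivity
    linarith) (2 ^ a)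
  refine le_trans (le_of_eq ?_) h
  push_cast
  rw [← mul_pow]
  norm_num

lemma regular (Γ : Finset (AddChar G ℂ)) (D : ℕ) (hD : Γ.card ≤ D) (hD1 : 1 ≤ D) (r : ℝ) (hr : 0 < r) (a : ℕ) :
    ∃ ρ, r / 2 ≤ ρ ∧ ρ ≤ r ∧
      ((bohr Γ (ρ + r * (1 / 2) ^ (a + D + 4))).card : ℝ) ≤ (1 + (1 / 2) ^ a) * (bohr Γ ρ).card := by
  set s := r * (1 / 2 : ℝ) ^ (a + D + 4) with hs
  by_contra hcon
  push Not at hcon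
  set J := 2 ^ a * (7 * D) with hJ
  have hJ1 : 1 ≤ J := Nat.succ_le_of_lt (by positivity)
  have hJs : J * s ≤ r / 2 := by
    have h1 : ((7 * D : ℕ) : ℝ) ≤ 2 ^ (D + 3) := by
      have : D < 2 ^ D := Nat.lt_two_pow_self
      have : 7 * D ≤ 2 ^ (D + 3) := by rw [pow_add]; omega
      exact_mod_cast this
    have h2 : (J : ℝ) ≤ 2 ^ a * 2 ^ (D + 3) := by
      rw [hJ]; push_cast at h1 ⊢; gcongr
    calc (J : ℝ) * s ≤ (2 ^ a * 2 ^ (D + 3)) * s := by gcongr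
      _ = ((2 : ℝ) ^ (a + D + 3) * (1 / 2) ^ (a + D + 3)) * (r / 2) := by rw [hs]; ring
      _ = r / 2 := by rw [← mul_pow]; norm_num
  have hstep : ∀ i : ℕ, i ≤ J → (1 + (1 / 2 : ℝ) ^ a) ^ i * (bohr Γ (r / 2)).card ≤ (bohr Γ (r / 2 + i * s)).card := by
    intro i
    induction i with
    | zero => intro _; simp
    | succ i ih =>
      intro hi
      have h1 := ih (by omega)
      have hsp : 0 ≤ s := by positivity
      have h3 : (i : ℝ) ≤ J := by exact_mod_cast (by omega : i ≤ J)
      have h4 : (i : ℝ) * s ≤ J * s := by gcongr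
      have h2 := hcon (r / 2 + i * s) (by nlinarith [mul_nonneg (Nat.cast_nonneg (α := ℝ) i) hsp]) (by linarith)
      have e : r / 2 + i * s + s = r / 2 + ((i + 1 : ℕ) : ℝ) * s := by push_cast; ring
      rw [e] at h2
      calc _ = (1 + (1 / 2 : ℝ) ^ a) * ((1 + (1 / 2 : ℝ) ^ a) ^ i * (bohr Γ (r / 2)).card) := by ring
        _ ≤ (1 + (1 / 2 : ℝ) ^ a) * (bohr Γ (r / 2 + i * s)).card := by gcongr
        _ ≤ _ := h2.le
  -- final strictness
  have hc0 : (0 : ℝ) < (bohr Γ (r / 2)).card := by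
    exact_mod_cast (bohr_nonempty (by positivity)).card_pos
  have h1 := hstep J le_rfl
  have h2 : (1 + (1 / 2 : ℝ) ^ a) ^ J ≥ 2 ^ (7 * D) := by
    rw [hJ, pow_mul]
    gcongr
    exact two_le_pow_aux a
  have h3 : ((bohr Γ (r / 2 + J * s)).card : ℝ) ≤ (bohr Γ r).card := by
    exact_mod_cast Finset.card_le_card (bohr_mono (by linarith))
  have h4 : ((bohr Γ r).card : ℝ) ≤ 81 ^ D * (bohr Γ (r / 2)).card := by
    have := bohr_size Γ (r / 2) r (by positivity) 2 (by push_cast; linarith)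
    have h5 : ((4 * 2 + 1) ^ 2) ^ Γ.card ≤ 81 ^ D := Nat.pow_le_pow_right (by norm_num) hD
    have h6 := this.trans (Nat.mul_le_mul_right _ h5)
    exact_mod_cast h6
  have h5 : (2 : ℝ) ^ (7 * D) ≤ 81 ^ D := by
    have : (2 : ℝ) ^ (7 * D) * (bohr Γ (r / 2)).card ≤ 81 ^ D * (bohr Γ (r / 2)).card := by
      calc _ ≤ (1 + (1 / 2 : ℝ) ^ a) ^ J * (bohr Γ (r / 2)).card := by gcongr
        _ ≤ _ := h1.trans (h3.trans h4)
    exact le_of_mul_le_mul_right this hc0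
  rw [pow_mul] at h5
  have h6 : (81 : ℝ) ^ D < (2 ^ 7) ^ D := by
    apply pow_lt_pow_left₀ (by norm_num) (by norm_num) (by omega)
  linarith

lemma shift_small (Γ : Finset (AddChar G ℂ)) (ρ s δ : ℝ)
    (h : ((bohr Γ (ρ + s)).card : ℝ) ≤ (1 + δ) * (bohr Γ ρ).card) (hs : 0 ≤ s) (x : G) (hx : x ∈ bohr Γ s) :
    (((bohr Γ ρ).filter fun b => b + x ∉ bohr Γ ρ).card : ℝ) ≤ δ * (bohr Γ ρ).card := by
  have h1 : ((bohr Γ ρ).filter fun b => b + x ∉ bohr Γ ρ).card ≤ (bohr Γ (ρ + s) \ bohr Γ ρ).card := by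
    refine Finset.card_le_card_of_injOn (fun b => b + x) ?_ (fun x _ y _ h => add_right_cancel h)
    intro b hb
    have hb' := Finset.mem_filter.mp (Finset.mem_coe.mp hb)
    exact Finset.mem_coe.mpr (Finset.mem_sdiff.mpr ⟨add_mem_bohr hb'.1 hx, hb'.2⟩)
  rw [Finset.card_sdiff_of_subset (bohr_mono (by linarith))] at h1
  have h2 : (bohr Γ ρ).card ≤ (bohr Γ (ρ + s)).card := Finset.card_le_card (bohr_mono (by linarith))
  have h3 : (((bohr Γ ρ).filter fun b => b + x ∉ bohr Γ ρ).card : ℝ) ≤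
      ((bohr Γ (ρ + s)).card : ℝ) - (bohr Γ ρ).card := by
    rw [← Nat.cast_sub h2]
    exact_mod_cast h1
  linarith

/-- halving -/
noncomputable def half : G →+ G := nsmulAddMonoidHom ((Fintype.card G + 1) / 2)

lemma half_add (hodd : Odd (Fintype.card G)) (x : G) : half x + half x = x := by
  unfold half
  simp only [nsmulAddMonoidHom_apply]
  rw [← add_nsmul]
  obtain ⟨k, hk⟩ := hodd
  have : (Fintype.card G + 1) / 2 + (Fintype.card G + 1) / 2 = Fintype.card G + 1 := by omega
  rw [this, add_nsmul, card_nsmul_eq_zero, one_nsmul, zero_add]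

lemma double_inj (hodd : Odd (Fintype.card G)) {x y : G} (h : x + x = y + y) : x = y := by
  have e : ∀ z : G, half (z + z) = z := fun z => by rw [map_add, half_add hodd]
  rw [← e x, h, e]

open Classical in
noncomputable def halfΓ (Γ : Finset (AddChar G ℂ)) : Finset (AddChar G ℂ) :=
  Γ.image fun γ => γ.compAddMonoidHom half

lemma halfΓ_card (Γ : Finset (AddChar G ℂ)) : (halfΓ Γ).card ≤ Γ.card := Finset.card_image_le

lemma mem_bohr_half {Γ : Finset (AddChar G ℂ)} {r : ℝ} {x : G} : x ∈ bohr (halfΓ Γ) r ↔ half x ∈ bohr Γ r := by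
  simp [mem_bohr, halfΓ]

lemma bohr_half_sub (hodd : Odd (Fintype.card G)) {Γ : Finset (AddChar G ℂ)} {r : ℝ} {x : G}
    (hx : x ∈ bohr (halfΓ Γ) r) : x ∈ bohr Γ (r + r) := by
  have := mem_bohr_half.mp hx
  rw [← half_add hodd x]
  exact add_mem_bohr this this

end bohrsets

end KM

set_option linter.unusedSectionVars false
set_option linter.unusedVariables false

open Finset

namespace KM

section densities

variable {G : Type} [AddCommGroup G] [Fintype G] [DecidableEq G]

def Dense (A : Finset G) (Γ : Finset (AddChar G ℂ)) (r α : ℝ) : Prop :=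
  ∀ (I : Type) [Fintype I] (w : I → ℝ) (pos : I → G), (∀ i, 0 ≤ w i) → (∀ i, pos i ∈ bohr Γ r) →
    ∃ x, α * ∑ i, w i ≤ ∑ i, w i * ind A (x + pos i)

lemma Dense.mono {A : Finset G} {Γ : Finset (AddChar G ℂ)} {r s α : ℝ} (h : Dense A Γ r α) (hs : s ≤ r) :
    Dense A Γ s α := fun I _ w pos hw hp => h I w pos hw fun i => bohr_mono hs (hp i)

lemma not_dense {A : Finset G} {Γ : Finset (AddChar G ℂ)} {r β : ℝ} (h : ¬ Dense A Γ r β) :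
    ∃ (J : Type) (_ : Fintype J) (w : J → ℝ) (pos : J → G), (∀ i, 0 ≤ w i) ∧ (∀ i, pos i ∈ bohr Γ r) ∧
      ∑ i, w i = 1 ∧ ∀ x, ∑ i, w i * ind A (x + pos i) < β := by
  unfold Dense at h
  push Not at h
  obtain ⟨I, hI, w, pos, hw, hp, hx⟩ := h
  have h0 : 0 < ∑ i, w i := by
    rcases (Finset.sum_nonneg fun i (_ : i ∈ univ) => hw i).lt_or_eq with h | h
    · exact h
    · exfalso
      have := hx 0
      rw [← h, mul_zero] at this
      have h2 : 0 ≤ ∑ i, w i * ind A (0 + pos i) :=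
        Finset.sum_nonneg fun i _ => mul_nonneg (hw i) (ind_nonneg _ _)
      linarith
  refine ⟨I, hI, fun i => w i / ∑ i, w i, pos, fun i => div_nonneg (hw i) h0.le, hp, ?_, ?_⟩
  · rw [← Finset.sum_div, div_self h0.ne']
  · intro x
    have : ∑ i, w i / (∑ i, w i) * ind A (x + pos i) = (∑ i, w i * ind A (x + pos i)) / ∑ i, w i := by
      rw [Finset.sum_div]
      exact Finset.sum_congr rfl fun i _ => by ring
    rw [this, div_lt_iff₀ h0]
    exact hx x

lemma hub1 {J : Type} [Fintype J] (w : J → ℝ) (pos : J → G) (hw : ∀ i, 0 ≤ w i) (hw1 : ∑ i, w i = 1)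
    (A B : Finset G) (β δ : ℝ) (h : ∀ x, ∑ i, w i * ind A (x + pos i) < β)
    (hB : ∀ i, ((B.filter fun b => b + - pos i ∉ B).card : ℝ) ≤ δ * B.card) (x : G) :
    ∑ b ∈ B, ind A (x + b) ≤ (β + δ) * B.card := by
  have h1 : ∀ i, ∑ b ∈ B, ind A (x + b) ≤ ∑ b ∈ B, ind A (x + b + pos i) + δ * B.card := by
    intro i
    rw [← Finset.sum_filter_add_sum_filter_not B (fun b => b + -pos i ∈ B)]
    apply add_le_add
    · have : ∑ b ∈ B.filter (fun b => b + -pos i ∈ B), ind A (x + b) =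
          ∑ b ∈ (B.filter (fun b => b + -pos i ∈ B)).image (fun b => b + -pos i), ind A (x + b + pos i) := by
        rw [Finset.sum_image (fun x _ y _ h => add_right_cancel h)]
        refine Finset.sum_congr rfl fun b _ => ?_
        congr 1; abel
      rw [this]
      refine Finset.sum_le_sum_of_subset_of_nonneg ?_ fun _ _ _ => ind_nonneg _ _
      intro b hb
      obtain ⟨b', hb', rfl⟩ := Finset.mem_image.mp hb
      exact (Finset.mem_filter.mp hb').2
    · refine le_trans ?_ (hB i)
      calc _ ≤ ∑ b ∈ B.filter (fun b => ¬ b + -pos i ∈ B), (1 : ℝ) :=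
            Finset.sum_le_sum fun _ _ => ind_le_one _ _
        _ = _ := by simp
  have h2 : ∑ i, w i * ∑ b ∈ B, ind A (x + b) ≤ ∑ i, w i * (∑ b ∈ B, ind A (x + b + pos i) + δ * B.card) :=
    Finset.sum_le_sum fun i _ => mul_le_mul_of_nonneg_left (h1 i) (hw i)
  rw [← Finset.sum_mul, hw1, one_mul] at h2
  simp only [mul_add] at h2
  rw [Finset.sum_add_distrib, ← Finset.sum_mul, hw1, one_mul] at h2
  have h3 : ∑ i, w i * ∑ b ∈ B, ind A (x + b + pos i) ≤ β * B.card := by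
    simp only [Finset.mul_sum]
    rw [Finset.sum_comm]
    calc _ ≤ ∑ b ∈ B, β := Finset.sum_le_sum fun b _ => (h (x + b)).le
      _ = _ := by rw [Finset.sum_const, nsmul_eq_mul]; ring
  linarith

lemma hub2 {F J : Type} [Fintype F] [Fintype J] (v : F → ℝ) (hv : ∀ i, 0 ≤ v i) (hv1 : ∑ i, v i = 1)
    (p : F → G) (w : J → ℝ) (pos : J → G) (hw : ∀ i, 0 ≤ w i) (hw1 : ∑ i, w i = 1)
    (A : Finset G) (β : ℝ) (h : ∀ x, ∑ i, w i * ind A (x + pos i) < β) (x : G) :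
    ∑ i : F × J, ∑ j : F × J, (v i.1 * w i.2) * (v j.1 * w j.2) *
      ind A (x + ((p i.1 + pos i.2) - (p j.1 + pos j.2))) ≤ β := by
  rw [Finset.sum_comm]
  have h1 : ∀ j : F × J, ∑ i : F × J, (v i.1 * w i.2) * (v j.1 * w j.2) *
      ind A (x + ((p i.1 + pos i.2) - (p j.1 + pos j.2))) ≤ (v j.1 * w j.2) * β := by
    intro j
    rw [Fintype.sum_prod_type]
    calc _ = (v j.1 * w j.2) * ∑ f, v f * ∑ y, w y * ind A ((x + p f - (p j.1 + pos j.2)) + pos y) := by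
          rw [Finset.mul_sum]
          refine Finset.sum_congr rfl fun f _ => ?_
          rw [Finset.mul_sum, Finset.mul_sum]
          refine Finset.sum_congr rfl fun y _ => ?_
          have : x + ((p f + pos y) - (p j.1 + pos j.2)) = (x + p f - (p j.1 + pos j.2)) + pos y := by abel
          simp only [this]
          ring
      _ ≤ (v j.1 * w j.2) * ∑ f, v f * β := by
          refine mul_le_mul_of_nonneg_left ?_ (mul_nonneg (hv _) (hw _))
          exact Finset.sum_le_sum fun f _ => mul_le_mul_of_nonneg_left (h _).le (hv f)
      _ = _ := by rw [← Finset.sum_mul, hv1, one_mul]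
  refine (Finset.sum_le_sum fun j _ => h1 j).trans (le_of_eq ?_)
  rw [← Finset.sum_mul, Fintype.sum_prod_type]
  simp only [← Finset.mul_sum]
  rw [hw1]
  simp only [mul_one]
  rw [hv1, one_mul]

lemma find_x {A : Finset G} {Γ : Finset (AddChar G ℂ)} {r α : ℝ} (h : Dense A Γ r α)
    (B : Finset G) (hB : B.Nonempty) (hBr : B ⊆ bohr Γ r) {I : Type} [Fintype I] (w : I → ℝ) (hw : ∀ i, 0 ≤ w i)
    (hw1 : ∑ i, w i = 1) (pos : I → G) (hp : ∀ i j, pos i - pos j ∈ bohr Γ r)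
    (b1 : ∀ x, ∑ b ∈ B, ind A (x + b) ≤ 1.03 * α * B.card)
    (b2 : ∀ x, ∑ i, ∑ j, w i * w j * ind A (x + (pos i - pos j)) ≤ 1.02 * α) :
    ∃ x, 0.98 * α * B.card ≤ ∑ b ∈ B, ind A (x + b) ∧
      0.97 * α ≤ ∑ i, ∑ j, w i * w j * ind A (x + (pos i - pos j)) := by
  have hBc : (0 : ℝ) < B.card := by exact_mod_cast hB.card_pos
  obtain ⟨x, hx⟩ := h (B ⊕ (I × I)) (Sum.elim (fun _ => 1 / (B.card : ℝ)) (fun q => w q.1 * w q.2))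
    (Sum.elim (fun b => (b : G)) (fun q => pos q.1 - pos q.2)) (by
      rintro (b | q)
      · simp
      · exact mul_nonneg (hw _) (hw _)) (by
      rintro (b | q)
      · exact hBr b.2
      · exact hp _ _)
  rw [Fintype.sum_sum_type, Fintype.sum_sum_type] at hx
  simp only [Sum.elim_inl, Sum.elim_inr] at hx
  rw [Fintype.sum_prod_type, Fintype.sum_prod_type] at hx
  have e1 : ∑ x : I, ∑ y : I, w x * w y = 1 := by
    simp only [← Finset.mul_sum]
    rw [hw1]; simp only [mul_one]; exact hw1
  have e2 : ∑ _b : B, 1 / (B.card : ℝ) = 1 := by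
    rw [Finset.sum_const, Finset.card_univ, Fintype.card_coe, nsmul_eq_mul]
    field_simp
  have e3 : ∑ b : B, 1 / (B.card : ℝ) * ind A (x + b) = (∑ b ∈ B, ind A (x + b)) / B.card := by
    rw [← Finset.mul_sum, Finset.sum_coe_sort B (fun b => ind A (x + b))]
    ring
  dsimp only at hx
  rw [e1, e2, e3] at hx
  have h1 := b1 x
  have h2 := b2 x
  refine ⟨x, ?_, ?_⟩
  · have : 0.98 * α ≤ (∑ b ∈ B, ind A (x + b)) / B.card := by linarith
    rwa [le_div_iff₀ hBc] at this
  · have : (∑ b ∈ B, ind A (x + b)) / B.card ≤ 1.03 * α := by rwa [div_le_iff₀ hBc]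
    linarith

lemma avg_c {J : Type} [Fintype J] (w : J → ℝ) (q : J → G) (hw : ∀ i, 0 ≤ w i) (hw1 : ∑ i, w i = 1)
    (T T2 : Finset G) (hT : T.Nonempty) (hT2 : T2.Nonempty) (Φ : G → ℝ) (C v : ℝ) (hv : v = 1 / (T.card * T2.card))
    (h : C ≤ ∑ i : (T × T2) × J, ∑ j : (T × T2) × J, (v * w i.2) * (v * w j.2) *
      Φ (((i.1.1 : G) + i.1.2 + q i.2) - ((j.1.1 : G) + j.1.2 + q j.2))) :
    ∃ c, C * (T.card * T2.card) ≤ ∑ t ∈ T, ∑ u ∈ T2, Φ (t - u + c) := by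
  have hTc : (0 : ℝ) < T.card := by exact_mod_cast hT.card_pos
  have hT2c : (0 : ℝ) < T2.card := by exact_mod_cast hT2.card_pos
  have hv0 : 0 ≤ v := by rw [hv]; positivity
  obtain ⟨c, hc⟩ := Finite.exists_max (fun c : G => ∑ t ∈ T, ∑ u ∈ T2, Φ (t - u + c))
  refine ⟨c, ?_⟩
  set M := ∑ t ∈ T, ∑ u ∈ T2, Φ (t - u + c) with hM
  let e : ((T × T2) × J) × ((T × T2) × J) ≃ ((T2 × T) × (J × J)) × (T × T2) :=
    { toFun := fun p => (((p.1.1.2, p.2.1.1), (p.1.2, p.2.2)), (p.1.1.1, p.2.1.2))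
      invFun := fun p => (((p.2.1, p.1.1.1), p.1.2.1), ((p.1.1.2, p.2.2), p.1.2.2))
      left_inv := fun _ => rfl
      right_inv := fun _ => rfl }
  have h1 : ∑ i : (T × T2) × J, ∑ j : (T × T2) × J, (v * w i.2) * (v * w j.2) *
      Φ (((i.1.1 : G) + i.1.2 + q i.2) - ((j.1.1 : G) + j.1.2 + q j.2)) =
      ∑ k : (T2 × T) × (J × J), (v * v * (w k.2.1 * w k.2.2)) *
        ∑ t ∈ T, ∑ u ∈ T2, Φ (t - u + ((k.1.1 : G) - k.1.2 + q k.2.1 - q k.2.2)) := by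
    rw [← Fintype.sum_prod_type', Fintype.sum_equiv e _
      (fun p => (v * v * (w p.1.2.1 * w p.1.2.2)) *
        Φ ((p.2.1 : G) - p.2.2 + ((p.1.1.1 : G) - p.1.1.2 + q p.1.2.1 - q p.1.2.2))),
      Fintype.sum_prod_type]
    · refine Finset.sum_congr rfl fun k _ => ?_
      rw [Fintype.sum_prod_type, Finset.mul_sum, ← Finset.sum_coe_sort T]
      refine Finset.sum_congr rfl fun t _ => ?_
      rw [Finset.mul_sum, ← Finset.sum_coe_sort T2]
    · intro p
      simp only [e, Equiv.coe_fn_mk]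
      have : ((p.1.1.1 : G) + p.1.1.2 + q p.1.2) - ((p.2.1.1 : G) + p.2.1.2 + q p.2.2) =
        (p.1.1.1 : G) - p.2.1.2 + ((p.1.1.2 : G) - p.2.1.1 + q p.1.2 - q p.2.2) := by abel
      rw [this]
      ring
  rw [h1] at h
  have h2 : ∑ k : (T2 × T) × (J × J), (v * v * (w k.2.1 * w k.2.2)) *
        ∑ t ∈ T, ∑ u ∈ T2, Φ (t - u + ((k.1.1 : G) - k.1.2 + q k.2.1 - q k.2.2)) ≤
      ∑ k : (T2 × T) × (J × J), (v * v * (w k.2.1 * w k.2.2)) * M :=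
    Finset.sum_le_sum fun k _ => mul_le_mul_of_nonneg_left (hc _)
      (mul_nonneg (mul_nonneg hv0 hv0) (mul_nonneg (hw _) (hw _)))
  have h3 : ∑ k : (T2 × T) × (J × J), (v * v * (w k.2.1 * w k.2.2)) * M = v * M := by
    rw [← Finset.sum_mul, ← Finset.mul_sum, Fintype.sum_prod_type]
    dsimp only
    have e1 : ∑ y : J × J, w y.1 * w y.2 = 1 := by
      rw [Fintype.sum_prod_type]
      simp only [← Finset.mul_sum]
      rw [hw1]; simp only [mul_one]; exact hw1
    rw [e1, Finset.sum_const, Finset.card_univ, Fintype.card_prod, Fintype.card_coe, Fintype.card_coe,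
      nsmul_eq_mul, hv]
    push_cast
    field_simp
  have h4 : C ≤ v * M := h.trans (h2.trans (le_of_eq h3))
  rw [hv, one_div, inv_mul_eq_div, le_div_iff₀ (by positivity)] at h4
  exact h4

end densities

end KM

set_option linter.unusedSectionVars false
set_option linter.unusedVariables false

open Finset

namespace KM

section tail

variable {G : Type} [AddCommGroup G] [Fintype G] [DecidableEq G]

def kk (l : ℕ) : ℕ := 2 + (2 * l + 1) * (80 * (l + 1))
def nn (l : ℕ) : ℕ := 8 * (nAP (kk l) + 3)

lemma dens_aux (l : ℕ) (α' Bc t t2 a1 a2 R : ℝ) (hBc : 0 < Bc) (hα : 0.98 * (1 / 2 : ℝ) ^ l ≤ α')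
    (ht : 0 ≤ t) (ht2 : 0 ≤ t2) (ha1 : 0 ≤ a1) (ha2 : 0 ≤ a2) (hR0 : 0 ≤ R) (hR : R ≤ 2 * Bc)
    (h : (1 / 4) * ((1.2 * (α' ^ 2 * Bc)) ^ (80 * (l + 1)) * (t * t2)) ≤ a1 * a2 * R ^ (80 * (l + 1))) :
    t * t2 ≤ 2 ^ kk l * (a1 * a2) := by
  have hp : (0 : ℝ) < (1 / 2) ^ l := by positivity
  have h1 : (1 / 2 : ℝ) ^ (2 * l + 1) ≤ 0.6 * α' ^ 2 := by
    have e : (1 / 2 : ℝ) ^ (2 * l + 1) = (1 / 2) * ((1 / 2) ^ l) ^ 2 := by ring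
    rw [e]
    nlinarith
  set n := 80 * (l + 1) with hn
  have h2 : (1 / 2 : ℝ) ^ kk l * (t * t2) * (2 * Bc) ^ n ≤ (a1 * a2) * (2 * Bc) ^ n := by
    calc _ = (1 / 4) * (((1 / 2 : ℝ) ^ (2 * l + 1) * (2 * Bc)) ^ n * (t * t2)) := by
          rw [kk, ← hn, pow_add, pow_mul, mul_pow ((1 / 2 : ℝ) ^ (2 * l + 1)) (2 * Bc) n]
          generalize (2 * Bc) ^ n = y
          generalize ((1 / 2 : ℝ) ^ (2 * l + 1)) ^ n = z
          ring
      _ ≤ (1 / 4) * ((0.6 * α' ^ 2 * (2 * Bc)) ^ n * (t * t2)) := by gcongr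
      _ = (1 / 4) * ((1.2 * (α' ^ 2 * Bc)) ^ n * (t * t2)) := by congr 3; ring
      _ ≤ _ := h
      _ ≤ _ := by gcongr
  have h3 := le_of_mul_le_mul_right h2 (by positivity)
  have h4 : t * t2 = 2 ^ kk l * ((1 / 2 : ℝ) ^ kk l * (t * t2)) := by
    rw [← mul_assoc, ← mul_pow]; norm_num
  rw [h4]
  gcongr

theorem tail_step (A A' : Finset G) (x0 : G) (hA' : ∀ z ∈ A', x0 + z ∈ A) (Bc α α' : ℝ) (hBc : 0 < Bc) (l : ℕ)
    (hl : (1 / 2 : ℝ) ^ l ≤ α) (hα' : 0.98 * α ≤ α') (hcard : (A'.card : ℝ) = α' * Bc)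
    (Γ' : Finset (AddChar G ℂ)) (D : ℕ) (hD : Γ'.card ≤ D) (hD1 : 1 ≤ D) (σ1 σ2 s2 : ℝ) (hσ1 : 0 ≤ σ1)
    (hσ2 : 0 ≤ σ2) (hs2 : 0 < s2)
    (reg1 : ((bohr Γ' (σ1 + 2 * σ2)).card : ℝ) ≤ 2 * (bohr Γ' σ1).card)
    (reg2 : ((bohr Γ' (σ2 + s2)).card : ℝ) ≤ 2 * (bohr Γ' σ2).card)
    (R : Finset G) (hR : ∀ a ∈ A', ∀ y ∈ bohr Γ' σ2, a - y ∈ R) (hRc : (R.card : ℝ) ≤ 2 * Bc) (c : G)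
    (hQ : (1.2 * (α' ^ 2 * Bc)) ^ (80 * (l + 1)) * ((bohr Γ' σ1).card * (bohr Γ' σ2).card) ≤
      ∑ x ∈ bohr Γ' σ1, ∑ y ∈ bohr Γ' σ2, (acorr (ind A') (x - y + c)) ^ (80 * (l + 1))) :
    ∃ Λ : Finset (AddChar G ℂ), Λ.card ≤ nn l ∧ ∀ rs : ℝ, rs ≤ s2 * (1 / 2) ^ (2 * D + nn l + kk l + 18) →
      rs ≤ (1 / 2) ^ (nn l + kk l + 9) → ∀ Γs : Finset (AddChar G ℂ), Γ' ⊆ Γs → Λ ⊆ Γs → Dense A Γs rs (1.02 * α) := by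
  have hlp : (0 : ℝ) < (1 / 2) ^ l := by positivity
  have hα : 0 < α := by linarith
  have hα'0 : 0 < α' := by linarith
  set V := α' ^ 2 * Bc with hV
  have hVp : 0 < V := by positivity
  set T := bohr Γ' σ1 with hT
  set T2 := bohr Γ' σ2 with hT2
  have hTn : T.Nonempty := bohr_nonempty hσ1
  have hT2n : T2.Nonempty := bohr_nonempty hσ2
  have hTc : (0 : ℝ) < T.card := by exact_mod_cast hTn.card_pos
  have hT2c : (0 : ℝ) < T2.card := by exact_mod_cast hT2n.card_pos
  obtain ⟨A1, hA1, A2, hA2, hdens, hbad⟩ := sift A' T T2 R c (80 * (l + 1)) (by omega) V hVp hTn hT2n hR hQ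
  set k := kk l with hk
  set n := nn l with hn
  have hd := dens_aux l α' Bc T.card T2.card A1.card A2.card R.card hBc (by linarith) hTc.le hT2c.le
    (by positivity) (by positivity) (by positivity) hRc hdens
  rw [← hk] at hd
  have hprod : (0 : ℝ) < T.card * T2.card := by positivity
  have hA12 : (0 : ℝ) < A1.card * A2.card := by
    by_contra hneg
    push Not at hneg
    have : (2 : ℝ) ^ k * (A1.card * A2.card) ≤ 0 := mul_nonpos_of_nonneg_of_nonpos (by positivity) hneg
    linarith
  have hA1c : (0 : ℝ) < A1.card := by
    rcases (Nat.cast_nonneg (α := ℝ) A1.card).lt_or_eq with h | h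
    · exact h
    · rw [← h] at hA12; simp at hA12
  have hA2c : (0 : ℝ) < A2.card := by
    rcases (Nat.cast_nonneg (α := ℝ) A2.card).lt_or_eq with h | h
    · exact h
    · rw [← h] at hA12; simp at hA12
  have hA1n : A1.Nonempty := by rw [← Finset.card_pos]; exact_mod_cast hA1c
  have hA2n : A2.Nonempty := by rw [← Finset.card_pos]; exact_mod_cast hA2c
  have hA1T : (A1.card : ℝ) ≤ T.card := by exact_mod_cast Finset.card_le_card hA1
  have hA2T : (A2.card : ℝ) ≤ T2.card := by exact_mod_cast Finset.card_le_card hA2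
  have d1 : (T.card : ℝ) ≤ 2 ^ k * A1.card := by
    refine le_of_mul_le_mul_right ?_ hT2c
    calc _ ≤ (2 : ℝ) ^ k * (A1.card * A2.card) := hd
      _ ≤ 2 ^ k * (A1.card * T2.card) := by gcongr
      _ = _ := by ring
  have d2 : (T2.card : ℝ) ≤ 2 ^ k * A2.card := by
    refine le_of_mul_le_mul_left ?_ hTc
    calc _ ≤ (2 : ℝ) ^ k * (A1.card * A2.card) := hd
      _ ≤ 2 ^ k * (T.card * A2.card) := by gcongr
      _ = _ := by ring
  -- the set S
  classical
  set S := (bohr Γ' (σ1 + σ2)).filter (fun t => 1.1 * V ≤ acorr (ind A') (t + c)) with hS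
  have hgood : 0.99 * (A1.card * A2.card : ℝ) ≤ ∑ x ∈ A1, ∑ y ∈ A2, ind S (x - y) := by
    have h1 : ∀ x ∈ A1, ∀ y ∈ A2, (1 : ℝ) - (if acorr (ind A') (x - y + c) < 1.1 * V then (1 : ℝ) else 0) ≤
        ind S (x - y) := by
      intro x hx y hy
      by_cases hh : acorr (ind A') (x - y + c) < 1.1 * V
      · rw [if_pos hh]; linarith [ind_nonneg S (x - y)]
      · rw [if_neg hh]
        have : x - y ∈ S := by
          rw [hS, Finset.mem_filter]
          exact ⟨sub_mem_bohr (hA1 hx) (hA2 hy), not_lt.mp hh⟩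
        simp [ind, this]
    have h2 := Finset.sum_le_sum fun x hx => Finset.sum_le_sum (h1 x hx)
    simp only [Finset.sum_sub_distrib, Finset.sum_const, nsmul_eq_mul, mul_one] at h2
    linarith
  -- regularity for T3 and T4
  obtain ⟨σ3, h3a, h3b, reg3⟩ := regular Γ' D hD hD1 s2 hs2 0
  set s3 := s2 * (1 / 2 : ℝ) ^ (0 + D + 4) with hs3
  have hs3p : 0 < s3 := by positivity
  obtain ⟨σ4, h4a, h4b, reg4⟩ := regular Γ' D hD hD1 s3 hs3p (n + k + 10)
  set s4 := s3 * (1 / 2 : ℝ) ^ (n + k + 10 + D + 4) with hs4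
  have hs4p : 0 < s4 := by positivity
  have hσ3 : 0 < σ3 := by linarith
  have hσ4 : 0 < σ4 := by linarith
  set T3 := bohr Γ' σ3 with hT3
  set T4 := bohr Γ' σ4 with hT4
  have hT3n : T3.Nonempty := bohr_nonempty hσ3.le
  have hT4n : T4.Nonempty := bohr_nonempty hσ4.le
  have hT3c : (0 : ℝ) < T3.card := by exact_mod_cast hT3n.card_pos
  obtain ⟨X, hX3, hXc, hXb⟩ := almost_periodic S A1 A2 T T2 T3 (bohr Γ' (σ2 + s2)) (bohr Γ' (σ1 + 2 * σ2)) k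
    hA1n hA2n hT3n d1 d2
    (by
      refine le_trans ?_ reg1
      exact_mod_cast (Finset.card_le_card ((Finset.filter_subset _ _).trans (bohr_mono (by linarith)))))
    (by
      intro s hs a ha
      have h1 := (Finset.mem_filter.mp hs).1
      have := add_mem_bohr h1 (hA2 ha)
      exact bohr_mono (by linarith) this)
    reg1
    (by
      intro a ha t ht
      exact bohr_mono (by linarith) (add_mem_bohr (hA2 ha) ht))
    reg2 hgood
  have hXn : X.Nonempty := by
    rw [Finset.nonempty_iff_ne_empty]
    rintro rfl
    simp at hXc
    exact hT3n.ne_empty hXc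
  obtain ⟨Λ, hΛc, hΛ⟩ := chang T3 T4 (bohr Γ' (σ3 + s3)) X hT4n hX3 hXn
    (by
      intro a ha t ht
      exact bohr_mono (by linarith) (add_mem_bohr ha ht))
    (by
      refine reg3.trans (le_of_eq ?_)
      norm_num) (nAP k) hXc
  refine ⟨Λ, hΛc, ?_⟩
  intro rs hrs hrs2 Γs hΓ' hΛs I _ w pos hw hpos
  -- each shift is good
  have hshift : ∀ i, 0.96 * ((fam A1 A2 X (k + 5)).card : ℝ) ≤ ∑ j ∈ fam A1 A2 X (k + 5), ind S (famq j + pos i) := by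
    intro i
    apply hXb
    have hb := mem_bohr.mp (hpos i)
    have hb4 : pos i ∈ bohr Γ' s4 := by
      rw [mem_bohr]
      intro γ hγ
      refine (hb γ (hΓ' hγ)).trans (hrs.trans (le_of_eq ?_))
      rw [hs4, hs3]; ring
    have hsm := shift_small Γ' σ4 s4 ((1 / 2) ^ (n + k + 10)) reg4 hs4p.le (pos i) hb4
    intro γ hγ
    have := hΛ (pos i) ((1 / 2) ^ (n + k + 10)) ((1 / 2) ^ (n + k + 9)) (by positivity) hsm
      (fun γ hγ => (hb γ (hΛs hγ)).trans hrs2) γ hγ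
    refine this.trans ?_
    have hnn : 8 * (nAP k + 3) = n := rfl
    rw [hnn]
    have h1 : (n : ℝ) ≤ 2 ^ n := by exact_mod_cast (Nat.lt_two_pow_self (n := n)).le
    have h2 : ((1 / 2 : ℝ) ^ n) * 2 ^ n = 1 := by rw [← mul_pow]; norm_num
    calc _ ≤ (2 : ℝ) ^ n * (1 / 2) ^ (n + k + 9) + 2 * (1 / 2) ^ (n + k + 10) * 2 ^ n := by gcongr
      _ = ((1 / 2 : ℝ) ^ n * 2 ^ n) * (1 / 2) ^ (k + 8) := by ring
      _ = _ := by rw [h2, one_mul]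
  by_contra hcon
  push Not at hcon
  set W := ∑ i, w i with hW
  have hWp : 0 < W := by
    rcases (Finset.sum_nonneg fun i (_ : i ∈ univ) => hw i).lt_or_eq with h | h
    · exact h
    · exfalso
      have := hcon 0
      rw [hW, ← h, mul_zero] at this
      have h2 : 0 ≤ ∑ i, w i * ind A (0 + pos i) :=
        Finset.sum_nonneg fun i _ => mul_nonneg (hw i) (ind_nonneg _ _)
      linarith
  set Jc := ((fam A1 A2 X (k + 5)).card : ℝ) with hJc
  have hJp : 0 < Jc := by
    rw [hJc, fam_card]
    have : (0 : ℝ) < X.card := by exact_mod_cast hXn.card_pos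
    positivity
  -- lower bound
  have hlow : 1.1 * V * (0.96 * Jc * W) ≤
      ∑ i, w i * ∑ j ∈ fam A1 A2 X (k + 5), acorr (ind A') (famq j + pos i + c) := by
    rw [hW, Finset.mul_sum, Finset.mul_sum]
    refine Finset.sum_le_sum fun i _ => ?_
    have h1 : 1.1 * V * ∑ j ∈ fam A1 A2 X (k + 5), ind S (famq j + pos i) ≤
        ∑ j ∈ fam A1 A2 X (k + 5), acorr (ind A') (famq j + pos i + c) := by
      rw [Finset.mul_sum]
      refine Finset.sum_le_sum fun j _ => ?_
      unfold ind
      split_ifs with hh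
      · rw [mul_one]; exact (Finset.mem_filter.mp hh).2
      · rw [mul_zero]
        exact Finset.sum_nonneg fun s _ => mul_nonneg (ind_nonneg A' _) (ind_nonneg A' _)
    calc _ = w i * (1.1 * V * (0.96 * Jc)) := by ring
      _ ≤ w i * (1.1 * V * ∑ j ∈ fam A1 A2 X (k + 5), ind S (famq j + pos i)) := by
          have := hshift i
          have hwi := hw i
          gcongr
      _ ≤ _ := mul_le_mul_of_nonneg_left h1 (hw i)
  have hupp : ∑ i, w i * ∑ j ∈ fam A1 A2 X (k + 5), acorr (ind A') (famq j + pos i + c) ≤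
      Jc * (A'.card * (1.02 * α * W)) := by
    have e : ∑ i, w i * ∑ j ∈ fam A1 A2 X (k + 5), acorr (ind A') (famq j + pos i + c) =
        ∑ j ∈ fam A1 A2 X (k + 5), ∑ s, ind A' s * ∑ i, w i * ind A' ((s + famq j + c) + pos i) := by
      simp only [acorr, Finset.mul_sum]
      rw [Finset.sum_comm]
      refine Finset.sum_congr rfl fun j _ => ?_
      rw [Finset.sum_comm]
      refine Finset.sum_congr rfl fun s _ => ?_
      refine Finset.sum_congr rfl fun i _ => ?_
      have : s + (famq j + pos i + c) = (s + famq j + c) + pos i := by abel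
      rw [this]; ring
    rw [e]
    calc _ ≤ ∑ j ∈ fam A1 A2 X (k + 5), ∑ s, ind A' s * (1.02 * α * W) := by
          refine Finset.sum_le_sum fun j _ => Finset.sum_le_sum fun s _ => ?_
          refine mul_le_mul_of_nonneg_left ?_ (ind_nonneg _ _)
          refine le_trans ?_ (hcon (x0 + (s + famq j + c))).le
          refine Finset.sum_le_sum fun i _ => mul_le_mul_of_nonneg_left ?_ (hw i)
          unfold ind
          by_cases hh : (s + famq j + c) + pos i ∈ A'
          · have := hA' _ hh
            rw [← add_assoc] at this
            rw [if_pos hh, if_pos this]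
          · rw [if_neg hh]; split_ifs <;> norm_num
      _ = _ := by
          rw [← Finset.sum_mul, sum_ind] <;> simp [hJc]
  have hfin : 1.1 * V * (0.96 * Jc * W) ≤ Jc * (A'.card * (1.02 * α * W)) := hlow.trans hupp
  rw [hcard, hV] at hfin
  have hfin2 : (1.1 * 0.96 * α') * (Jc * W * (α' * Bc)) ≤ (1.02 * α) * (Jc * W * (α' * Bc)) := by linarith
  have := le_of_mul_le_mul_right hfin2 (by positivity)
  linarith

end tail

end KM

set_option linter.unusedSectionVars false
set_option linter.unusedVariables false

open Finset

namespace KM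

section fullstep

variable {G : Type} [AddCommGroup G] [Fintype G] [DecidableEq G]

lemma sconv_le_one (hodd : Odd (Fintype.card G)) (A A' : Finset G)
    (hno : ∀ x ∈ A, ∀ y ∈ A, ∀ z ∈ A, x + y = z + z → x = y) (x0 d : G) (hA' : ∀ z ∈ A', x0 + z ∈ A)
    (hz : x0 + d ∈ A) : sconv (ind A') (d + d) ≤ 1 := by
  unfold sconv
  have h1 : ∀ s, ind A' s * ind A' (d + d - s) ≤ if s = d then 1 else 0 := by
    intro s
    unfold ind
    by_cases h1 : s ∈ A'
    · by_cases h2 : d + d - s ∈ A'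
      · have := hno _ (hA' _ h1) _ (hA' _ h2) _ hz (by abel)
        have h3 : s = d + d - s := add_left_cancel this
        have h4 : s = d := double_inj hodd (by
          calc s + s = (d + d - s) + s := by rw [← h3]
            _ = d + d := by abel)
        subst h4
        simp [h1]
      · rw [if_neg h2, mul_zero]; split_ifs <;> norm_num
    · rw [if_neg h1, zero_mul]; split_ifs <;> norm_num
  refine (Finset.sum_le_sum fun s _ => h1 s).trans ?_
  simp

lemma exp_aux (r : ℝ) (a b d : ℕ) : r * (1 / 2) ^ a / 16 * (1 / 2) ^ b / 2 * (1 / 2) ^ b * (1 / 2) ^ d =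
    r * (1 / 2) ^ (a + 4 + b + 1 + b + d) := by
  simp only [pow_add]
  generalize (1 / 2 : ℝ) ^ a = x
  generalize (1 / 2 : ℝ) ^ b = y
  generalize (1 / 2 : ℝ) ^ d = z
  ring

def MM (l D : ℕ) : ℕ := l + 5 * D + nn l + kk l + 42

theorem step (hodd : Odd (Fintype.card G)) (A : Finset G)
    (hno : ∀ x ∈ A, ∀ y ∈ A, ∀ z ∈ A, x + y = z + z → x = y) (Γ : Finset (AddChar G ℂ)) (r α : ℝ)
    (hden : Dense A Γ r α) (hr : 0 < r) (hr1 : r ≤ 1) (l D : ℕ) (hl : (1 / 2 : ℝ) ^ l ≤ α)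
    (hD : Γ.card ≤ D) (hD1 : 1 ≤ D) :
    ((bohr Γ (r / 2)).card : ℝ) ≤ 128 * 4 ^ l ∨
    ∃ Γs : Finset (AddChar G ℂ), Γs.card ≤ Γ.card + nn l ∧ Dense A Γs (r * (1 / 2) ^ MM l D) (1.02 * α) := by
  classical
  have hlp : (0 : ℝ) < (1 / 2) ^ l := by positivity
  have hα : 0 < α := by linarith
  obtain ⟨ρ, hρ1, hρ2, hreg⟩ := regular Γ D hD hD1 r hr (l + 7)
  set s0 := r * (1 / 2 : ℝ) ^ (l + 7 + D + 4) with hs0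
  have hs0p : 0 < s0 := by positivity
  have hs0r : s0 ≤ r := by
    rw [hs0]; exact mul_le_of_le_one_right hr.le (pow_le_one₀ (by norm_num) (by norm_num))
  set δ := (1 / 2 : ℝ) ^ (l + 7) with hδ
  have hδp : 0 < δ := by positivity
  have hδα : 128 * δ ≤ α := by
    have : 128 * δ = (1 / 2 : ℝ) ^ l := by rw [hδ, pow_add]; norm_num; ring
    linarith
  have hδ1 : δ ≤ 1 := pow_le_one₀ (by norm_num) (by norm_num)
  set R1 := s0 / 16 with hR1
  have hR1p : 0 < R1 := by positivity
  have hR1s : 16 * R1 = s0 := by rw [hR1]; ring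
  by_cases hd : Dense A Γ R1 (1.02 * α)
  · right
    refine ⟨Γ, by omega, hd.mono ?_⟩
    have : R1 = r * (1 / 2) ^ (l + 7 + D + 4 + 4) := by rw [hR1, hs0, pow_add _ _ 4]; ring
    rw [this]
    refine mul_le_mul_of_nonneg_left (pow_le_pow_of_le_one (by norm_num) (by norm_num) ?_) hr.le
    unfold MM; omega
  obtain ⟨J, hJ, w, pos, hw, hpos, hw1, hlt⟩ := not_dense hd
  set Γ' := halfΓ Γ with hΓ'
  have hD' : Γ'.card ≤ D := (halfΓ_card Γ).trans hD
  obtain ⟨σ1, h1a, h1b, reg1⟩ := regular Γ' D hD' hD1 R1 hR1p 0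
  set s1 := R1 * (1 / 2 : ℝ) ^ (0 + D + 4) with hs1
  have hs1p : 0 < s1 := by positivity
  have hs1R : s1 ≤ R1 := mul_le_of_le_one_right hR1p.le (pow_le_one₀ (by norm_num) (by norm_num))
  obtain ⟨σ2, h2a, h2b, reg2⟩ := regular Γ' D hD' hD1 (s1 / 2) (by positivity) 0
  set s2 := s1 / 2 * (1 / 2 : ℝ) ^ (0 + D + 4) with hs2
  have hs2p : 0 < s2 := by positivity
  set B := bohr Γ ρ with hB
  have hBn : B.Nonempty := bohr_nonempty (by linarith)
  have hBc : (0 : ℝ) < B.card := by exact_mod_cast hBn.card_pos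
  set T := bohr Γ' σ1 with hT
  set T2 := bohr Γ' σ2 with hT2
  have hTn : T.Nonempty := bohr_nonempty (by linarith)
  have hT2n : T2.Nonempty := bohr_nonempty (by linarith)
  have hTc : (0 : ℝ) < T.card := by exact_mod_cast hTn.card_pos
  have hT2c : (0 : ℝ) < T2.card := by exact_mod_cast hT2n.card_pos
  obtain ⟨v, hv⟩ : ∃ v : ℝ, v = 1 / (T.card * T2.card) := ⟨_, rfl⟩
  have hv0 : 0 ≤ v := by rw [hv]; positivity
  have hv1 : ∑ i : T × T2, v = 1 := by
    rw [Finset.sum_const, Finset.card_univ, Fintype.card_prod, Fintype.card_coe, Fintype.card_coe, nsmul_eq_mul, hv]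
    push_cast
    field_simp
  let p : T × T2 → G := fun f => half (f.1 : G) + half (f.2 : G)
  let P : (T × T2) × J → G := fun i => p i.1 + pos i.2
  let W : (T × T2) × J → ℝ := fun i => v * w i.2
  have hW0 : ∀ i, 0 ≤ W i := fun i => mul_nonneg hv0 (hw _)
  have hW1 : ∑ i, W i = 1 := by
    change ∑ i : (T × T2) × J, v * w i.2 = 1
    rw [Fintype.sum_prod_type]
    rw [← hv1]
    refine Finset.sum_congr rfl fun f _ => ?_
    rw [← Finset.mul_sum, hw1, mul_one]
  have hPm : ∀ i, P i ∈ bohr Γ (R1 + R1 + R1) := by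
    intro i
    refine add_mem_bohr (add_mem_bohr ?_ ?_) (hpos _)
    · exact bohr_mono h1b (mem_bohr_half.mp i.1.1.2)
    · exact bohr_mono (by linarith) (mem_bohr_half.mp i.1.2.2)
  have hPd : ∀ i j, P i - P j ∈ bohr Γ (6 * R1) := fun i j =>
    bohr_mono (by linarith) (sub_mem_bohr (hPm i) (hPm j))
  have hb1 : ∀ x, ∑ b ∈ B, ind A (x + b) ≤ 1.03 * α * B.card := by
    intro x
    refine (hub1 w pos hw hw1 A B (1.02 * α) δ hlt (fun i => ?_) x).trans ?_
    · exact shift_small Γ ρ s0 δ hreg hs0p.le _ (bohr_mono (by linarith) (neg_mem_bohr (hpos i)))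
    · refine mul_le_mul_of_nonneg_right ?_ hBc.le
      linarith
  have hb2 : ∀ x, ∑ i, ∑ j, W i * W j * ind A (x + (P i - P j)) ≤ 1.02 * α := by
    intro x
    exact hub2 (fun _ => v) (fun _ => hv0) hv1 p w pos hw hw1 A (1.02 * α) hlt x
  obtain ⟨x0, hx1, hx2⟩ := find_x hden B hBn (bohr_mono hρ2) W hW0 hW1 P
    (fun i j => bohr_mono (by linarith) (hPd i j)) hb1 hb2
  set A' := B.filter (fun b => x0 + b ∈ A) with hA'
  have hA'm : ∀ z ∈ A', x0 + z ∈ A := fun z hz => (Finset.mem_filter.mp hz).2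
  have hA'c : (A'.card : ℝ) = ∑ b ∈ B, ind A (x0 + b) := by
    rw [hA', Finset.card_filter]; push_cast; rfl
  obtain ⟨α', hα'⟩ : ∃ α' : ℝ, α' = A'.card / B.card := ⟨_, rfl⟩
  have hcard : (A'.card : ℝ) = α' * B.card := by rw [hα']; field_simp
  have hα'1 : α' ≤ 1 := by
    rw [hα', div_le_one hBc]
    exact_mod_cast Finset.card_le_card (Finset.filter_subset _ _)
  have hα'2 : 0.98 * α ≤ α' := by
    rw [← hA'c, hcard] at hx1
    exact le_of_mul_le_mul_right hx1 hBc
  by_cases hbig : α' ^ 2 * B.card < 100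
  · left
    have hsub : ((bohr Γ (r / 2)).card : ℝ) ≤ B.card := by
      exact_mod_cast Finset.card_le_card (bohr_mono hρ1)
    refine hsub.trans ?_
    have h4 : (4 : ℝ) ^ l * ((1 / 2) ^ l) ^ 2 = 1 := by
      rw [← pow_mul, mul_comm l 2, pow_mul, ← mul_pow]; norm_num
    have h5 : (0.98 * (1 / 2 : ℝ) ^ l) ^ 2 ≤ α' ^ 2 := by
      apply pow_le_pow_left₀ (by positivity); linarith
    have h6 : (0.98 * (1 / 2 : ℝ) ^ l) ^ 2 * B.card ≤ 100 := by
      refine le_trans ?_ hbig.le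
      exact mul_le_mul_of_nonneg_right h5 hBc.le
    have h7 : (4 : ℝ) ^ l * ((0.98 * (1 / 2 : ℝ) ^ l) ^ 2 * B.card) ≤ 4 ^ l * 100 := by gcongr
    have h8 : (4 : ℝ) ^ l * ((0.98 * (1 / 2 : ℝ) ^ l) ^ 2 * B.card) = 0.98 ^ 2 * B.card := by
      calc _ = 0.98 ^ 2 * ((4 : ℝ) ^ l * ((1 / 2) ^ l) ^ 2) * B.card := by ring
        _ = _ := by rw [h4]; ring
    rw [h8] at h7
    have : (0 : ℝ) < 4 ^ l := by positivity
    linarith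
  right
  push Not at hbig
  have hPP : ∀ i j, (P i + P i) - (P j + P j) = (P i - P j) + (P i - P j) := fun i j => by abel
  have hQ := moment_Q W hW0 (fun i => P i + P i) A' B (Finset.filter_subset _ _)
    (fun x hx => neg_mem_bohr hx) α' δ hcard (by linarith) hδp.le (by linarith) hα'1
    (fun i j => by
      refine shift_small Γ ρ s0 δ hreg hs0p.le _ ?_
      rw [hPP]
      exact bohr_mono (by linarith) (add_mem_bohr (hPd i j) (hPd i j)))
    hbig (fun i j => x0 + (P i - P j) ∈ A)
    (fun i j hg => by
      rw [hPP]
      exact sconv_le_one hodd A A' hno x0 _ hA'm hg)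
    l (by
      rw [hW1, one_pow, mul_one]
      refine le_trans ?_ hx2
      rw [pow_add]
      norm_num
      norm_num at hl
      linarith)
  rw [hW1, one_pow, mul_one] at hQ
  have hPe : ∀ i, P i + P i = ((i.1.1 : G) + i.1.2 + (pos i.2 + pos i.2)) := by
    intro i
    change half (i.1.1 : G) + half (i.1.2 : G) + pos i.2 + (half (i.1.1 : G) + half (i.1.2 : G) + pos i.2) = _
    calc _ = (half (i.1.1 : G) + half (i.1.1 : G)) + (half (i.1.2 : G) + half (i.1.2 : G)) + (pos i.2 + pos i.2) := by abel
      _ = _ := by rw [half_add hodd, half_add hodd]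
  simp only [hPe] at hQ
  obtain ⟨c, hc⟩ := avg_c w (fun j => pos j + pos j) hw hw1 T T2 hTn hT2n
    (fun t => acorr (ind A') t ^ (80 * (l + 1))) _ v hv hQ
  obtain ⟨Λ, hΛc, hΛ⟩ := tail_step A A' x0 hA'm B.card α α' hBc l hl hα'2 hcard Γ' D hD' hD1 σ1 σ2 s2
    (by linarith) (by linarith) hs2p
    (by
      have h : ((bohr Γ' (σ1 + 2 * σ2)).card : ℝ) ≤ (bohr Γ' (σ1 + s1)).card := by
        exact_mod_cast Finset.card_le_card (bohr_mono (by linarith))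
      refine h.trans (reg1.trans (le_of_eq ?_))
      rw [hT, pow_zero]; ring)
    (by
      refine reg2.trans (le_of_eq ?_)
      rw [hT2, pow_zero]; ring)
    (bohr Γ (ρ + s0))
    (by
      intro a ha y hy
      have h1 : a ∈ bohr Γ ρ := (Finset.mem_filter.mp ha).1
      exact bohr_mono (by linarith) (sub_mem_bohr h1 (bohr_half_sub hodd hy)))
    (by
      refine hreg.trans ?_
      refine mul_le_mul_of_nonneg_right ?_ hBc.le
      linarith) c hc
  refine ⟨Γ' ∪ Λ, ?_, hΛ _ ?_ ?_ _ Finset.subset_union_left Finset.subset_union_right⟩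
  · exact (Finset.card_union_le _ _).trans (add_le_add (halfΓ_card Γ) hΛc)
  · have e : s2 * (1 / 2 : ℝ) ^ (2 * D + nn l + kk l + 18) =
        r * (1 / 2) ^ ((l + 7 + D + 4) + 4 + (0 + D + 4) + 1 + (0 + D + 4) + (2 * D + nn l + kk l + 18)) := by
      rw [hs2, hs1, hR1, hs0]
      exact exp_aux r _ _ _
    rw [e]
    refine mul_le_mul_of_nonneg_left (pow_le_pow_of_le_one (by norm_num) (by norm_num) ?_) hr.le
    unfold MM; omega
  · calc r * (1 / 2 : ℝ) ^ MM l D ≤ 1 * (1 / 2 : ℝ) ^ MM l D := by gcongr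
      _ = (1 / 2 : ℝ) ^ MM l D := one_mul _
      _ ≤ _ := pow_le_pow_of_le_one (by norm_num) (by norm_num) (by unfold MM; omega)

end fullstep

end KM

set_option linter.unusedSectionVars false
set_option linter.unusedVariables false

open Finset

namespace KM

section final

variable {G : Type} [AddCommGroup G] [Fintype G] [DecidableEq G]

lemma dense_le_one {A : Finset G} {Γ : Finset (AddChar G ℂ)} {r α : ℝ} (hr : 0 ≤ r) (h : Dense A Γ r α) : α ≤ 1 := by
  obtain ⟨x, hx⟩ := h Unit (fun _ => 1) (fun _ => 0) (fun _ => by norm_num) (fun _ => zero_mem_bohr hr)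
  simp at hx
  exact hx.trans (ind_le_one _ _)

lemma dense_start (A : Finset G) (Γ : Finset (AddChar G ℂ)) (r : ℝ) :
    Dense A Γ r (A.card / Fintype.card G) := by
  intro I _ w pos hw _
  have hN : (0 : ℝ) < Fintype.card G := by exact_mod_cast Fintype.card_pos
  have h : ∑ x : G, (A.card / Fintype.card G : ℝ) * ∑ i, w i ≤ ∑ x : G, ∑ i, w i * ind A (x + pos i) := by
    rw [Finset.sum_comm, Finset.sum_const, Finset.card_univ, nsmul_eq_mul]
    have : ∀ i, ∑ x : G, w i * ind A (x + pos i) = w i * A.card := by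
      intro i
      rw [← Finset.mul_sum, ← sum_ind]
      congr 1
      exact Equiv.sum_comp (Equiv.addRight (pos i)) (ind A)
    simp_rw [this]
    rw [← Finset.sum_mul]
    apply le_of_eq
    field_simp
  obtain ⟨x, _, hx⟩ := Finset.exists_le_of_sum_le Finset.univ_nonempty h
  exact ⟨x, hx⟩

def DM (l : ℕ) : ℕ := 1 + 36 * (l + 1) * nn l

theorem iter (hodd : Odd (Fintype.card G)) (A : Finset G)
    (hno : ∀ x ∈ A, ∀ y ∈ A, ∀ z ∈ A, x + y = z + z → x = y) (α : ℝ) (l : ℕ) (hl : (1 / 2 : ℝ) ^ l ≤ α)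
    (h0 : Dense A ∅ 1 α) (i : ℕ) (hi : i ≤ 36 * (l + 1)) :
    (∃ j ≤ i, ∃ Γ : Finset (AddChar G ℂ), Γ.card ≤ DM l ∧
      ((bohr Γ ((1 / 2) ^ (j * MM l (DM l)) / 2)).card : ℝ) ≤ 128 * 4 ^ l) ∨
    ∃ Γ : Finset (AddChar G ℂ), Γ.card ≤ i * nn l ∧ Dense A Γ ((1 / 2) ^ (i * MM l (DM l))) (1.02 ^ i * α) := by
  induction i with
  | zero => right; exact ⟨∅, by simp, by simpa using h0⟩
  | succ i ih =>
    rcases ih (by omega) with ⟨j, hj, h⟩ | ⟨Γ, hΓ, hd⟩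
    · exact Or.inl ⟨j, by omega, h⟩
    have hΓD : Γ.card ≤ DM l := by
      unfold DM
      have : i * nn l ≤ 36 * (l + 1) * nn l := Nat.mul_le_mul_right _ (by omega)
      omega
    have hα : 0 < α := lt_of_lt_of_le (by positivity) hl
    have hl2 : (1 / 2 : ℝ) ^ l ≤ 1.02 ^ i * α :=
      hl.trans (le_mul_of_one_le_left hα.le (one_le_pow₀ (by norm_num)))
    rcases step hodd A hno Γ _ _ hd (by positivity) (pow_le_one₀ (by norm_num) (by norm_num)) l (DM l) hl2 hΓD
      (by unfold DM; omega) with h | ⟨Γs, hc, hds⟩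
    · exact Or.inl ⟨i, by omega, Γ, hΓD, h⟩
    · right
      refine ⟨Γs, ?_, ?_⟩
      · rw [add_mul, one_mul]; omega
      · have e1 : (1 / 2 : ℝ) ^ ((i + 1) * MM l (DM l)) = (1 / 2) ^ (i * MM l (DM l)) * (1 / 2) ^ MM l (DM l) := by
          rw [add_mul, one_mul, pow_add]
        have e2 : (1.02 : ℝ) ^ (i + 1) * α = 1.02 * (1.02 ^ i * α) := by rw [pow_succ]; ring
        rw [e1, e2]
        exact hds

def EE (l : ℕ) : ℕ := 2 * (36 * (l + 1) * MM l (DM l) + 5) * DM l + 7 + 2 * l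

lemma bohr_two (Γ : Finset (AddChar G ℂ)) : bohr Γ 2 = univ := by
  ext x
  simp only [Finset.mem_univ, iff_true]
  rw [mem_bohr]
  intro γ _
  refine (norm_sub_le _ _).trans ?_
  rw [AddChar.norm_apply]
  norm_num

theorem card_bound (hodd : Odd (Fintype.card G)) (A : Finset G)
    (hno : ∀ x ∈ A, ∀ y ∈ A, ∀ z ∈ A, x + y = z + z → x = y) (l : ℕ)
    (hl : (1 / 2 : ℝ) ^ l ≤ A.card / Fintype.card G) : (Fintype.card G : ℝ) ≤ 2 ^ EE l := by
  rcases iter hodd A hno _ l hl (dense_start A ∅ 1) (36 * (l + 1)) le_rfl with ⟨j, hj, Γ, hΓ, hb⟩ | ⟨Γ, _, hd⟩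
  · set M := MM l (DM l) with hM
    have hsz := bohr_size Γ ((1 / 2) ^ (j * M) / 2) 2 (by positivity) (4 * 2 ^ (j * M)) (by
      push_cast
      have : (2 : ℝ) ^ (j * M) * (1 / 2) ^ (j * M) = 1 := by rw [← mul_pow]; norm_num
      linarith)
    rw [bohr_two, Finset.card_univ] at hsz
    have h1 : ((4 * (4 * 2 ^ (j * M)) + 1) ^ 2) ^ Γ.card ≤ 2 ^ (2 * (36 * (l + 1) * M + 5) * DM l) := by
      calc ((4 * (4 * 2 ^ (j * M)) + 1) ^ 2) ^ Γ.card ≤ ((2 ^ (36 * (l + 1) * M + 5)) ^ 2) ^ Γ.card := by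
            have h : j * M ≤ 36 * (l + 1) * M := Nat.mul_le_mul_right _ hj
            have h' : 2 ^ (j * M) ≤ 2 ^ (36 * (l + 1) * M) := Nat.pow_le_pow_right (by norm_num) h
            have h'' : 1 ≤ 2 ^ (36 * (l + 1) * M) := Nat.one_le_two_pow
            have h3 : 4 * (4 * 2 ^ (j * M)) + 1 ≤ 2 ^ (36 * (l + 1) * M + 5) := by
              rw [pow_add]; omega
            gcongr
        _ = 2 ^ (2 * (36 * (l + 1) * M + 5) * Γ.card) := by rw [← pow_mul, ← pow_mul]; ring_nf
        _ ≤ _ := Nat.pow_le_pow_right (by norm_num) (Nat.mul_le_mul_left _ hΓ)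
    have hsz2 : (Fintype.card G : ℝ) ≤ 2 ^ (2 * (36 * (l + 1) * M + 5) * DM l) * (bohr Γ ((1 / 2) ^ (j * M) / 2)).card := by
      exact_mod_cast hsz.trans (Nat.mul_le_mul_right _ h1)
    refine hsz2.trans ((mul_le_mul_of_nonneg_left hb (by positivity)).trans (le_of_eq ?_))
    unfold EE
    rw [← hM, pow_add _ _ (2 * l), pow_add _ _ 7, pow_mul _ 2 l]
    norm_num
    ring
  · exfalso
    have h1 := dense_le_one (by positivity) hd
    have h2 : (2 : ℝ) ^ (l + 1) ≤ 1.02 ^ (36 * (l + 1)) := by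
      rw [pow_mul]
      exact pow_le_pow_left₀ (by norm_num) (by norm_num) _
    have h3 : (2 : ℝ) ^ (l + 1) * (1 / 2) ^ l ≤ 1.02 ^ (36 * (l + 1)) * (A.card / Fintype.card G : ℝ) := by
      gcongr
    have h4 : (2 : ℝ) ^ (l + 1) * (1 / 2) ^ l = 2 := by
      rw [pow_succ, mul_right_comm, ← mul_pow]; norm_num
    linarith

end final

def PB (f : ℕ → ℕ) : Prop := ∃ C a : ℕ, ∀ l, f l ≤ C * (l + 1) ^ a

lemma PB.const (n : ℕ) : PB fun _ => n := ⟨n, 0, fun l => by simp⟩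
lemma PB.id : PB fun l => l := ⟨1, 1, fun l => by simp⟩
lemma PB.mul {f g : ℕ → ℕ} (hf : PB f) (hg : PB g) : PB fun l => f l * g l := by
  obtain ⟨C, a, h⟩ := hf
  obtain ⟨C', a', h'⟩ := hg
  refine ⟨C * C', a + a', fun l => (Nat.mul_le_mul (h l) (h' l)).trans (le_of_eq ?_)⟩
  rw [pow_add]; ring
lemma PB.add {f g : ℕ → ℕ} (hf : PB f) (hg : PB g) : PB fun l => f l + g l := by
  obtain ⟨C, a, h⟩ := hf
  obtain ⟨C', a', h'⟩ := hg
  refine ⟨C + C', a + a', fun l => (Nat.add_le_add (h l) (h' l)).trans ?_⟩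
  rw [add_mul]
  have h1 : (l + 1) ^ a ≤ (l + 1) ^ (a + a') := Nat.pow_le_pow_right (by omega) (by omega)
  have h2 : (l + 1) ^ a' ≤ (l + 1) ^ (a + a') := Nat.pow_le_pow_right (by omega) (by omega)
  exact Nat.add_le_add (Nat.mul_le_mul_left _ h1) (Nat.mul_le_mul_left _ h2)

lemma PB_kk : PB kk := by
  unfold kk
  exact (PB.const 2).add ((((PB.const 2).mul PB.id).add (PB.const 1)).mul ((PB.const 80).mul (PB.id.add (PB.const 1))))

lemma PB_nn : PB nn := by
  have h5 : PB fun l => kk l + 5 := PB_kk.add (PB.const 5)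
  have hm : PB fun l => mAP (kk l) := by
    unfold mAP
    simp only [pow_two]
    exact ((PB.const 80000).mul (h5.mul h5)).mul (((PB.const 2).mul PB_kk).add (PB.const 16))
  have hn : PB fun l => nAP (kk l) := by
    unfold nAP
    exact ((PB_kk.add (PB.const 1)).mul hm).add (PB.const 1)
  unfold nn
  exact (PB.const 8).mul (hn.add (PB.const 3))

lemma PB_36 : PB fun l => 36 * (l + 1) := (PB.const 36).mul (PB.id.add (PB.const 1))

lemma PB_DM : PB DM := by
  unfold DM
  exact (PB.const 1).add (PB_36.mul PB_nn)

lemma PB_EE : PB EE := by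
  have hM : PB fun l => MM l (DM l) := by
    unfold MM
    exact (((PB.id.add ((PB.const 5).mul PB_DM)).add PB_nn).add PB_kk).add (PB.const 42)
  unfold EE
  exact ((((PB.const 2).mul ((PB_36.mul hM).add (PB.const 5))).mul PB_DM).add (PB.const 7)).add ((PB.const 2).mul PB.id)

lemma EE_sq : ∃ K : ℝ, 0 < K ∧ ∀ l : ℕ, ((EE l : ℕ) : ℝ) ^ 2 ≤ K * 2 ^ l := by
  obtain ⟨C, a, h⟩ := PB_EE.mul PB_EE
  have ht := tendsto_pow_const_div_const_pow_of_one_lt a (r := (2 : ℝ)) (by norm_num)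
  obtain ⟨K, hK⟩ := ht.bddAbove_range
  have hK' : ∀ n : ℕ, (n : ℝ) ^ a / 2 ^ n ≤ K := fun n => hK ⟨n, rfl⟩
  refine ⟨C * (|K| * 2) + 1, by positivity, fun l => ?_⟩
  have h1 : ((EE l : ℕ) : ℝ) ^ 2 ≤ C * ((l + 1 : ℕ) : ℝ) ^ a := by
    rw [pow_two]; exact_mod_cast h l
  have h2 := hK' (l + 1)
  rw [div_le_iff₀ (by positivity)] at h2
  have hp : (0 : ℝ) < 2 ^ l := by positivity
  calc _ ≤ _ := h1
    _ ≤ C * (|K| * 2 ^ (l + 1)) := by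
        refine mul_le_mul_of_nonneg_left (h2.trans ?_) (by positivity)
        exact mul_le_mul_of_nonneg_right (le_abs_self K) (by positivity)
    _ = C * (|K| * 2) * 2 ^ l := by rw [pow_succ]; ring
    _ ≤ _ := by rw [add_mul]; linarith

end KM

theorem progression_free_sparse_abelian :
    ∃ c C : ℝ, 0 < c ∧ 0 < C ∧
      ∀ (G : Type) [AddCommGroup G] [Fintype G],
        3 ≤ Fintype.card G → Odd (Fintype.card G) →
        ∀ A : Finset G,
          (∀ x ∈ A, ∀ y ∈ A, ∀ z ∈ A, x + y = z + z → x = y) →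
          (A.card : ℝ) ≤
            C * Fintype.card G / Real.log (Fintype.card G) ^ ((1 : ℝ) + c) := by
  obtain ⟨K, hK, hE⟩ := KM.EE_sq
  refine ⟨1, 2 * K, one_pos, by positivity, ?_⟩
  intro G _ _ h3 hodd A hno
  classical
  have hN3 : (3 : ℝ) ≤ Fintype.card G := by exact_mod_cast h3
  have hlog : 0 < Real.log (Fintype.card G) := Real.log_pos (by linarith)
  have e : Real.log (Fintype.card G) ^ ((1 : ℝ) + 1) = Real.log (Fintype.card G) ^ 2 := by
    rw [← Real.rpow_natCast]; norm_num
  rw [e]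
  rcases A.eq_empty_or_nonempty with rfl | hA
  · simp; positivity
  have hAc : (0 : ℝ) < A.card := by exact_mod_cast hA.card_pos
  have hA1 : (A.card : ℝ) ≤ Fintype.card G := by exact_mod_cast Finset.card_le_univ A
  obtain ⟨n, hn1, hn2⟩ := exists_nat_pow_near_of_lt_one (x := (A.card / Fintype.card G : ℝ)) (y := (1 / 2 : ℝ))
    (by positivity) (by rw [div_le_one (by linarith)]; exact hA1) (by norm_num) (by norm_num)
  have hb := KM.card_bound hodd A hno (n + 1) hn1.le
  have hlg : Real.log (Fintype.card G) ≤ (KM.EE (n + 1) : ℕ) := by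
    have h := Real.log_le_log (by linarith) hb
    rw [Real.log_pow] at h
    refine h.trans (mul_le_of_le_one_right (by positivity) ?_)
    have := Real.log_two_lt_d9
    linarith
  have h1 : Real.log (Fintype.card G) ^ 2 ≤ K * 2 ^ (n + 1) :=
    (pow_le_pow_left₀ hlog.le hlg 2).trans (hE (n + 1))
  rw [le_div_iff₀ (by positivity)]
  rw [div_le_iff₀ (by linarith)] at hn2
  have h4 : (1 / 2 : ℝ) ^ n * 2 ^ (n + 1) = 2 := by
    rw [pow_succ, ← mul_assoc, ← mul_pow]; norm_num
  calc (A.card : ℝ) * Real.log (Fintype.card G) ^ 2 ≤ ((1 / 2) ^ n * Fintype.card G) * (K * 2 ^ (n + 1)) := by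
        gcongr
    _ = K * Fintype.card G * ((1 / 2) ^ n * 2 ^ (n + 1)) := by ring
    _ = _ := by rw [h4]; ring
end

section
/- Let H be an abelian group, let Γ, Γ' ⊆ H be finite sets, and let A ⊆ H be a finite set such that the translates a + Γ' for a ∈ A are pairwise disjoint. Then for all a, b ∈ H and all finitely supported functions f, g : H → ℝ_{≥0}: Σ_{x∈A} (Σ_{u∈Γ} f(a+x+u))·(Σ_{v∈Γ'} g(b+x+v)) ≤ Σ_{w∈Γ−Γ'} (f∘g)(a−b+w), where f∘g(t) = Σ_{y∈H} f(y)·g(y−t) and Γ−Γ' = {u−v : u∈Γ, v∈Γ'}. -/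
open scoped Pointwise

/-- **Lemma 7.2 (Bloom–Sisask), the collapsing lemma.** Let `Γ, Γ'` be finite subsets of an
abelian group `H`, and `A` a finite set whose translates `a + Γ'` (for `a ∈ A`) are pairwise
disjoint. Then for all `a, b` and all finitely supported `f, g : H → ℝ≥0`,
`∑_{x∈A} (∑_{u∈Γ} f(a+x+u))·(∑_{v∈Γ'} g(b+x+v)) ≤ ∑_{w∈Γ−Γ'} (f∘g)(a−b+w)`,
where `f∘g(t) = ∑_y f(y)·g(y−t)`. -/
theorem collapsing_lemma (H : Type*) [AddCommGroup H] [DecidableEq H]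
    (Γ Γ' A : Finset H)
    (hA : ∀ a₁ ∈ A, ∀ a₂ ∈ A, ∀ v₁ ∈ Γ', ∀ v₂ ∈ Γ', a₁ + v₁ = a₂ + v₂ → a₁ = a₂)
    (a b : H) (f g : H → ℝ) (hf : ∀ x, 0 ≤ f x) (hg : ∀ x, 0 ≤ g x)
    (hfs : (Function.support f).Finite) (hgs : (Function.support g).Finite) :
    ∑ x ∈ A, (∑ u ∈ Γ, f (a + x + u)) * (∑ v ∈ Γ', g (b + x + v)) ≤
      ∑ w ∈ Γ - Γ', ∑ᶠ y, f y * g (y - (a - b + w)) := by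
  classical
  set T : Finset H := hfs.toFinset ∪ (A ×ˢ Γ).image (fun p => a + p.1 + p.2) with hT
  have hR : ∀ w, ∑ᶠ y, f y * g (y - (a - b + w)) = ∑ y ∈ T, f y * g (y - (a - b + w)) := by
    intro w
    apply finsum_eq_sum_of_support_subset
    intro y hy
    have hy' : f y ≠ 0 := left_ne_zero_of_mul hy
    simp [hT, hy']
  have hL : ∑ x ∈ A, (∑ u ∈ Γ, f (a + x + u)) * (∑ v ∈ Γ', g (b + x + v)) =
      ∑ p ∈ A ×ˢ (Γ ×ˢ Γ'), f (a + p.1 + p.2.1) * g (b + p.1 + p.2.2) := by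
    rw [Finset.sum_product]
    refine Finset.sum_congr rfl fun x _ => ?_
    rw [Finset.sum_mul_sum, Finset.sum_product]
  simp_rw [hR]
  rw [hL, ← Finset.sum_product' (Γ - Γ') T (fun w y => f y * g (y - (a - b + w)))]
  let φ : H × H × H → H × H := fun p => (p.2.1 - p.2.2, a + p.1 + p.2.1)
  have hinj : Set.InjOn φ (A ×ˢ (Γ ×ˢ Γ') : Finset (H × H × H)) := by
    rintro ⟨x, u, v⟩ hp ⟨x', u', v'⟩ hq h
    simp only [Finset.coe_product, Set.mem_prod, Finset.mem_coe] at hp hq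
    simp only [φ, Prod.mk.injEq] at h
    obtain ⟨h1, h2⟩ := h
    have h3 : x + u = x' + u' := by
      rw [add_assoc, add_assoc] at h2
      exact add_left_cancel h2
    have h4 : x + v = x' + v' := by
      have e1 : x + v = (x + u) - (u - v) := by abel
      have e2 : x' + v' = (x' + u') - (u' - v') := by abel
      rw [e1, e2, h1, h3]
    have hx := hA x hp.1 x' hq.1 v hp.2.2 v' hq.2.2 h4
    subst hx
    rw [add_left_cancel h3, add_left_cancel h4]
  have hE : ∑ p ∈ A ×ˢ (Γ ×ˢ Γ'), f (a + p.1 + p.2.1) * g (b + p.1 + p.2.2) =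
      ∑ q ∈ (A ×ˢ (Γ ×ˢ Γ')).image φ, f q.2 * g (q.2 - (a - b + q.1)) := by
    rw [Finset.sum_image hinj]
    refine Finset.sum_congr rfl fun p _ => ?_
    have e : b + p.1 + p.2.2 = a + p.1 + p.2.1 - (a - b + (p.2.1 - p.2.2)) := by abel
    rw [e]
  rw [hE]
  apply Finset.sum_le_sum_of_subset_of_nonneg
  · intro q hq
    obtain ⟨⟨x, u, v⟩, hp, rfl⟩ := Finset.mem_image.1 hq
    simp only [Finset.mem_product] at hp
    refine Finset.mem_product.2 ⟨Finset.sub_mem_sub hp.2.1 hp.2.2, ?_⟩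
    refine Finset.mem_union_right _ (Finset.mem_image.2 ⟨(x, u), ?_, rfl⟩)
    exact Finset.mem_product.2 ⟨hp.1, hp.2.1⟩
  · intro q _ _
    exact mul_nonneg (hf _) (hg _)
end
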